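/- arXiv:1411.6963 — 3 statements merged into one kernel-verified Lean document; each statement's English description precedes it below -/
import Mathlib

section
/- For positive integers a, b with a ≤ b, the quadratic form f^{a,b}_c(x,y,z,w) = a·x² + b·y² + c·(z² + z·w + w²) represents every nonnegative integer (i.e., for every n ∈ ℕ₀ there exist integers x, y, z, w with n = f^{a,b}_c(x,y,z,w)) if and only if the triple (a,b,c) is one of: (1,b,1) with b ∈ {1,2,3,4,5,6}; (2,b,1) with b ∈ {2,3,4,5,6,7,8,9,10}; (1,b,2) with b ∈ {1,2,3,4,5}; (1,2,3); or (1,2,4). -/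
/-!
Write `A₂` for `z² + zw + w²`. Necessity is checked on the values 1, 2, 3, 5, 6, 10, which the
partial forms miss one after the other.

For sufficiency, `A₂` and `y² + 3z²` have the same values, so everything reduces to two ternary
forms: `x² + y² + 3z²`, which represents all `n ≥ 0` not of the form `9^k (9m + 6)`, and
`x² + 2y² + 6z²`, which represents all `n ≥ 0` not of the form `4^k (8m + 5)` (`repA_of_mod` and
`repB_of_mod`, up to the factors `9^k` and `4^k`). Given these, each of the listed quaternary forms
is treated by subtracting one suitable value `b y²` (or `x²` for `(1,2,4)`) from `n`; a
representation of `2n` by `x² + 2y² + 6z²` has `x` even, hence yields one of `n` by `2x² + A₂`.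

The two ternary theorems are proved by the method of Gauss and Dirichlet for three squares. One
builds a positive definite integral ternary form with Gram matrix
`[[a, b, s], [b, c, 0], [s, 0, n]]` of determinant 3; it represents `n`. With `e = ac - b²` the
determinant is `ne - s²c`, so one needs `-e` to be a square modulo `c = (ne - 3) / s²`. Dirichlet's
theorem provides `e` for which `c` is a prime up to a factor dividing 6, and quadratic reciprocity
evaluates the Jacobi symbol. Hermite reduction (`good_ternary`) shows that a form of determinant 3
is `⟨1⟩ ⊕ ⟨1⟩ ⊕ ⟨3⟩` or `⟨1⟩ ⊕ [[2, 1], [1, 2]]`, and these are told apart by the residues modulo 3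
of two-by-two principal minors (`minor_A`, `minor_B`). The second one is `x² + 2A₂`, which has the
same values as `x² + 2y² + 6z²`.
-/

/-! ### Reduction of ternary forms of determinant 3 -/

/-- The symmetric bilinear form on `ℤ³` with Gram matrix `(1) ⊕ [[α, β], [β, γ]]`. -/
def bil (α β γ : ℤ) (u v : ℤ × ℤ × ℤ) : ℤ :=
  u.1 * v.1 + α * (u.2.1 * v.2.1) + β * (u.2.1 * v.2.2 + u.2.2 * v.2.1) + γ * (u.2.2 * v.2.2)

/-- The Gram matrix `[[a, t, s], [t, b, r], [s, r, c]]` is the Gram matrix of three integer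
vectors `u, v, w` with respect to `bil α β γ`. -/
def Realized (α β γ a b c r s t : ℤ) : Prop :=
  ∃ u v w : ℤ × ℤ × ℤ, bil α β γ u u = a ∧ bil α β γ v v = b ∧ bil α β γ w w = c ∧
    bil α β γ v w = r ∧ bil α β γ u w = s ∧ bil α β γ u v = t

/-- The Gram matrix is realized in one of the two lattices `⟨1⟩ ⊕ ⟨1⟩ ⊕ ⟨3⟩` and
`⟨1⟩ ⊕ [[2, 1], [1, 2]]`. -/
def Good (a b c r s t : ℤ) : Prop :=
  Realized 1 0 3 a b c r s t ∨ Realized 2 1 2 a b c r s t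

lemma bil_comm (α β γ : ℤ) (u v : ℤ × ℤ × ℤ) : bil α β γ u v = bil α β γ v u := by
  unfold bil; ring

lemma Good.swap12 {a b c r s t : ℤ} (h : Good b a c s r t) : Good a b c r s t := by
  rcases h with ⟨u, v, w, h1, h2, h3, h4, h5, h6⟩ | ⟨u, v, w, h1, h2, h3, h4, h5, h6⟩
  · exact Or.inl ⟨v, u, w, h2, h1, h3, h5, h4, by rw [bil_comm, h6]⟩
  · exact Or.inr ⟨v, u, w, h2, h1, h3, h5, h4, by rw [bil_comm, h6]⟩

lemma Good.swap23 {a b c r s t : ℤ} (h : Good a c b r t s) : Good a b c r s t := by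
  rcases h with ⟨u, v, w, h1, h2, h3, h4, h5, h6⟩ | ⟨u, v, w, h1, h2, h3, h4, h5, h6⟩
  · exact Or.inl ⟨u, w, v, h1, h3, h2, by rw [bil_comm, h4], h6, h5⟩
  · exact Or.inr ⟨u, w, v, h1, h3, h2, by rw [bil_comm, h4], h6, h5⟩

lemma Realized.add12 {α β γ a b c r s t : ℤ} (k : ℤ)
    (h : Realized α β γ a (b + 2 * k * t + k ^ 2 * a) c (r + k * s) s (t + k * a)) :
    Realized α β γ a b c r s t := by
  obtain ⟨u, v, w, h1, h2, h3, h4, h5, h6⟩ := h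
  refine ⟨u, (v.1 - k * u.1, v.2.1 - k * u.2.1, v.2.2 - k * u.2.2), w, h1, ?_, h3, ?_, h5, ?_⟩ <;>
    simp only [bil] at *
  · linear_combination h2 - 2 * k * h6 + k ^ 2 * h1
  · linear_combination h4 - k * h5
  · linear_combination h6 - k * h1

lemma Good.add12 {a b c r s t : ℤ} (k : ℤ)
    (h : Good a (b + 2 * k * t + k ^ 2 * a) c (r + k * s) s (t + k * a)) : Good a b c r s t :=
  h.imp (Realized.add12 k) (Realized.add12 k)

lemma Good.add13 {a b c r s t : ℤ} (k : ℤ)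
    (h : Good a b (c + 2 * k * s + k ^ 2 * a) (r + k * t) (s + k * a) t) : Good a b c r s t :=
  (Good.add12 k h.swap23).swap23

lemma Good.add23 {a b c r s t : ℤ} (k : ℤ)
    (h : Good a b (c + 2 * k * r + k ^ 2 * b) (r + k * b) (s + k * t) t) : Good a b c r s t :=
  (Good.add13 k h.swap12).swap12

lemma exists_round {a : ℤ} (ha : 0 < a) (t : ℤ) :
    ∃ k : ℤ, 2 * (t + k * a) ≤ a ∧ -a ≤ 2 * (t + k * a) := by
  refine ⟨-((2 * t + a) / (2 * a)), ?_, ?_⟩ <;>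
  · have h1 := Int.emod_add_mul_ediv (2 * t + a) (2 * a)
    have h2 := Int.emod_nonneg (2 * t + a) (show 2 * a ≠ 0 by omega)
    have h3 := Int.emod_lt_of_pos (2 * t + a) (show 0 < 2 * a by omega)
    nlinarith

/-- A positive definite binary Gram matrix of determinant 3, next to an orthogonal unit vector. -/
lemma good_binary : ∀ (N : ℕ) (b c r : ℤ), b.toNat = N → 0 < b → b * c - r ^ 2 = 3 →
    Good 1 b c r 0 0 := by
  intro N
  induction N using Nat.strong_induction_on with
  | _ N ih =>
    intro b c r hN hb hd
    obtain ⟨k, hk1, hk2⟩ := exists_round hb r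
    apply Good.add23 k
    simp only [mul_zero, add_zero]
    have hd' : b * (c + 2 * k * r + k ^ 2 * b) - (r + k * b) ^ 2 = 3 := by linear_combination hd
    generalize c + 2 * k * r + k ^ 2 * b = c' at *
    generalize r + k * b = r' at *
    have hc : 0 < c' := by
      by_contra hc
      nlinarith [sq_nonneg r']
    by_cases hcb : c' < b
    · exact (ih c'.toNat (by omega) c' b r' rfl hc (by linear_combination hd')).swap23
    · have hr : (2 * r') ^ 2 ≤ b ^ 2 := by nlinarith
      have hb2 : b ≤ 2 := by nlinarith
      obtain rfl | rfl : b = 1 ∨ b = 2 := by omega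
      · obtain rfl : r' = 0 := by omega
        obtain rfl : c' = 3 := by omega
        exact Or.inl ⟨(1, 0, 0), (0, 1, 0), (0, 0, 1), by simp [bil]⟩
      · obtain rfl | rfl | rfl : r' = -1 ∨ r' = 0 ∨ r' = 1 := by omega
        · obtain rfl : c' = 2 := by omega
          exact Or.inr ⟨(1, 0, 0), (0, 1, 0), (0, 0, -1), by simp [bil]⟩
        · omega
        · obtain rfl : c' = 2 := by omega
          exact Or.inr ⟨(1, 0, 0), (0, 1, 0), (0, 0, 1), by simp [bil]⟩

/-- Every positive definite integral ternary Gram matrix of determinant 3 is realized in one of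
the two lattices. This is Hermite's reduction: the induction decreases the first diagonal entry
`a`, and for fixed `a` the leading minor `a * b - t ^ 2`. At the end `a ^ 3 ≤ 64 / 9`, so `a = 1`
and a unit vector splits off. -/
lemma good_ternary : ∀ (N M : ℕ) (a b c r s t : ℤ), a.toNat = N → (a * b - t ^ 2).toNat = M →
    0 < a → 0 < a * b - t ^ 2 →
    a * b * c + 2 * r * s * t - a * r ^ 2 - b * s ^ 2 - c * t ^ 2 = 3 → Good a b c r s t := by
  intro N
  induction N using Nat.strong_induction_on with
  | _ N ihN =>
    intro M
    induction M using Nat.strong_induction_on with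
    | _ M ihM =>
      intro a b c r s t hN hM ha hP hd
      -- The form `a f - (a x + t y + s z)²` in `y, z` has matrix `[[P, Q], [Q, R]]`.
      obtain ⟨k, hk1, hk2⟩ := exists_round hP (a * r - s * t)
      apply Good.add23 k
      have hQ : a * r - s * t + k * (a * b - t ^ 2) = a * (r + k * b) - (s + k * t) * t := by ring
      rw [hQ] at hk1 hk2
      have hd' : a * b * (c + 2 * k * r + k ^ 2 * b) + 2 * (r + k * b) * (s + k * t) * t
          - a * (r + k * b) ^ 2 - b * (s + k * t) ^ 2 - (c + 2 * k * r + k ^ 2 * b) * t ^ 2 = 3 := by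
        linear_combination hd
      generalize c + 2 * k * r + k ^ 2 * b = c' at *
      generalize r + k * b = r' at *
      generalize s + k * t = s' at *
      have hPR : (a * b - t ^ 2) * (a * c' - s' ^ 2) = 3 * a + (a * r' - s' * t) ^ 2 := by
        linear_combination a * hd'
      have hR : 0 < a * c' - s' ^ 2 := by
        by_contra hR
        nlinarith [sq_nonneg (a * r' - s' * t)]
      by_cases hRP : a * c' - s' ^ 2 < a * b - t ^ 2
      · exact (ihM (a * c' - s' ^ 2).toNat (by omega) a c' b r' t s' hN rfl ha hR
          (by linear_combination hd')).swap23
      · have hP4 : (a * b - t ^ 2) ^ 2 ≤ 4 * a := by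
          have : (2 * (a * r' - s' * t)) ^ 2 ≤ (a * b - t ^ 2) ^ 2 := by
            apply sq_le_sq'
            · linarith
            · linarith
          nlinarith
        obtain ⟨j, hj1, hj2⟩ := exists_round ha t
        apply Good.add12 j
        have hP' : a * b - t ^ 2 = a * (b + 2 * j * t + j ^ 2 * a) - (t + j * a) ^ 2 := by ring
        rw [hP'] at hP hP4
        have hd'' : a * (b + 2 * j * t + j ^ 2 * a) * c' + 2 * (r' + j * s') * s' * (t + j * a)
            - a * (r' + j * s') ^ 2 - (b + 2 * j * t + j ^ 2 * a) * s' ^ 2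
            - c' * (t + j * a) ^ 2 = 3 := by
          linear_combination hd'
        clear hPR hRP hR hQ hk1 hk2 hd hd' hP' hM
        generalize b + 2 * j * t + j ^ 2 * a = b' at *
        generalize r' + j * s' = r' at *
        generalize t + j * a = t' at *
        have hb : 0 < b' := by
          by_contra hb
          nlinarith [sq_nonneg t']
        by_cases hba : b' < a
        · exact (ihN b'.toNat (by omega) _ b' a c' s' r' t' rfl rfl hb (by linarith)
            (by linear_combination hd'')).swap12
        · have ht : (2 * t') ^ 2 ≤ a ^ 2 := by
            apply sq_le_sq' <;> linarith
          have h1 : 3 * a ^ 2 ≤ 4 * (a * b' - t' ^ 2) := by nlinarith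
          have h2 : (3 * a ^ 2) ^ 2 ≤ 64 * a := by
            calc (3 * a ^ 2) ^ 2 ≤ (4 * (a * b' - t' ^ 2)) ^ 2 := by gcongr
              _ ≤ 64 * a := by nlinarith
          have h3 : a < 2 := by
            by_contra h
            have h4 : 2 ≤ a := by omega
            have h5 : 8 ≤ a ^ 3 := by
              calc (8 : ℤ) = 2 ^ 3 := by norm_num
                _ ≤ a ^ 3 := by gcongr
            nlinarith
          obtain rfl : a = 1 := by omega
          obtain rfl : t' = 0 := by omega
          apply Good.add13 (-s')
          have := good_binary b'.toNat b' (c' - s' ^ 2) r' rfl hb (by linear_combination hd'')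
          convert this using 1 <;> ring

/-! ### Representability by the two ternary forms -/

/-- `n` is represented by `x² + y² + 3z²`. -/
def RepA (n : ℤ) : Prop := ∃ x y z : ℤ, n = x ^ 2 + y ^ 2 + 3 * z ^ 2

/-- `n` is represented by `x² + 2y² + 6z²`. -/
def RepB (n : ℤ) : Prop := ∃ x y z : ℤ, n = x ^ 2 + 2 * y ^ 2 + 6 * z ^ 2

/-- Every value of `y² + yz + z²` is a value of `y² + 3z²`: one of `y`, `z`, `y + z` is even. -/
lemma exists_diag (y z : ℤ) : ∃ u v : ℤ, y ^ 2 + y * z + z ^ 2 = u ^ 2 + 3 * v ^ 2 := by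
  rcases Int.even_or_odd' y with ⟨k, rfl | rfl⟩
  · exact ⟨z + k, k, by ring⟩
  · rcases Int.even_or_odd' z with ⟨l, rfl | rfl⟩
    · exact ⟨2 * k + 1 + l, l, by ring⟩
    · exact ⟨k - l, k + l + 1, by ring⟩

/-- The form with Gram matrix `[[a, b, s], [b, c, 0], [s, 0, n]]`, where `a = (b² + e) / c`, has
determinant `n e - s² c` and represents `n`. -/
lemma good_of_dvd {n e c s b : ℤ} (he : 0 < e) (hc : 0 < c) (hdet : n * e - s ^ 2 * c = 3)
    (hdvd : c ∣ b ^ 2 + e) : ∃ a, a * c - b ^ 2 = e ∧ Good a c n 0 s b := by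
  obtain ⟨a, ha⟩ := hdvd
  have hac : a * c - b ^ 2 = e := by linear_combination -ha
  refine ⟨a, hac, good_ternary _ _ a c n 0 s b rfl rfl ?_ (by omega)
    (by linear_combination hdet + n * hac)⟩
  by_contra h
  nlinarith [sq_nonneg b]

lemma minor_A (u v : ℤ × ℤ × ℤ) :
    (bil 1 0 3 u u * bil 1 0 3 v v - bil 1 0 3 u v ^ 2) % 3 ≠ 2 := by
  have h : bil 1 0 3 u u * bil 1 0 3 v v - bil 1 0 3 u v ^ 2 =
      (u.1 * v.2.1 - u.2.1 * v.1) ^ 2 +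
      3 * ((u.1 * v.2.2 - u.2.2 * v.1) ^ 2 + (u.2.1 * v.2.2 - u.2.2 * v.2.1) ^ 2) := by
    unfold bil; ring
  rw [h, Int.add_mul_emod_self_left, pow_two, Int.mul_emod]
  rcases (by omega : ∀ x : ℤ, x % 3 = 0 ∨ x % 3 = 1 ∨ x % 3 = 2) (u.1 * v.2.1 - u.2.1 * v.1) with
    h | h | h <;> simp [h]

lemma minor_B (u v : ℤ × ℤ × ℤ) :
    (bil 2 1 2 u u * bil 2 1 2 v v - bil 2 1 2 u v ^ 2) % 3 ≠ 1 := by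
  have h : bil 2 1 2 u u * bil 2 1 2 v v - bil 2 1 2 u v ^ 2 =
      2 * ((u.1 * (v.2.1 - v.2.2) - (u.2.1 - u.2.2) * v.1) *
        (u.1 * (v.2.1 - v.2.2) - (u.2.1 - u.2.2) * v.1)) +
      3 * (2 * (u.1 * v.2.1 - u.2.1 * v.1) * (u.1 * v.2.2 - u.2.2 * v.1) +
        (u.2.1 * v.2.2 - u.2.2 * v.2.1) ^ 2) := by
    unfold bil; ring
  rw [h, Int.add_mul_emod_self_left, Int.mul_emod, Int.mul_emod (_ - _)]
  rcases (by omega : ∀ x : ℤ, x % 3 = 0 ∨ x % 3 = 1 ∨ x % 3 = 2)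
    (u.1 * (v.2.1 - v.2.2) - (u.2.1 - u.2.2) * v.1) with
    h | h | h <;> simp [h]

/-- The residue of the leading minor `e` modulo 3 selects the lattice `⟨1⟩ ⊕ ⟨1⟩ ⊕ ⟨3⟩`. -/
lemma repA_of_dvd {n e c s b : ℤ} (he : 0 < e) (hc : 0 < c) (hdet : n * e - s ^ 2 * c = 3)
    (hdvd : c ∣ b ^ 2 + e) (he3 : e % 3 = 1) : RepA n := by
  obtain ⟨a, hac, h⟩ := good_of_dvd he hc hdet hdvd
  rcases h with ⟨u, v, w, h1, h2, h3, h4, h5, h6⟩ | ⟨u, v, w, h1, h2, h3, h4, h5, h6⟩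
  · exact ⟨w.1, w.2.1, w.2.2, by rw [← h3]; unfold bil; ring⟩
  · exact absurd (by rw [h1, h2, h6, hac]; exact he3) (minor_B u v)

/-- The lattice `⟨1⟩ ⊕ [[2, 1], [1, 2]]` is selected if the leading minor `e` is `2` modulo 3, or
if `3 ∣ n`, since then another principal minor is `a n - 1`. -/
lemma repB_of_dvd {n e c b : ℤ} (he : 0 < e) (hc : 0 < c) (hdet : n * e - c = 3)
    (hdvd : c ∣ b ^ 2 + e) (he3 : e % 3 = 2 ∨ n % 3 = 0) : RepB n := by
  obtain ⟨a, hac, h⟩ := good_of_dvd (n := n) (s := 1) he hc (by linear_combination hdet) hdvd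
  rcases h with ⟨u, v, w, h1, h2, h3, h4, h5, h6⟩ | ⟨u, v, w, h1, h2, h3, h4, h5, h6⟩
  · rcases he3 with he3 | hn3
    · exact absurd (by rw [h1, h2, h6, hac]; exact he3) (minor_A u v)
    · refine absurd ?_ (minor_A u w)
      rw [h1, h3, h5]
      obtain ⟨m, rfl⟩ := Int.dvd_of_emod_eq_zero hn3
      have : a * (3 * m) - 1 ^ 2 = 2 + 3 * (a * m - 1) := by ring
      omega
  · obtain ⟨y, z, hyz⟩ := exists_diag w.2.1 w.2.2
    exact ⟨w.1, y, z, by rw [← h3]; unfold bil; linear_combination 2 * hyz⟩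

/-! ### Jacobi symbols -/

open scoped NumberTheorySymbols

lemma jacobi_congr {a b : ℤ} {n : ℕ} (h : (n : ℤ) ∣ b - a) : J(a | n) = J(b | n) :=
  jacobiSym.mod_left' (Int.modEq_iff_dvd.2 h)

lemma jacobi_neg_one_one {n : ℕ} (h : n % 4 = 1) : J(-1 | n) = 1 := by
  rw [jacobiSym.at_neg_one (Nat.odd_iff.2 (by omega)), ZMod.χ₄_nat_one_mod_four h]

lemma jacobi_neg_one_three {n : ℕ} (h : n % 4 = 3) : J(-1 | n) = -1 := by
  rw [jacobiSym.at_neg_one (Nat.odd_iff.2 (by omega)), ZMod.χ₄_nat_three_mod_four h]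

lemma jacobi_neg_three {n : ℕ} (h : n % 2 = 1) : J(-3 | n) = J(-3 | n % 12) :=
  jacobiSym.mod_right (-3) (Nat.odd_iff.2 h)

lemma jacobi_neg_three_one {n : ℕ} (h : n % 6 = 1) : J(-3 | n) = 1 := by
  rw [jacobi_neg_three (by omega)]
  obtain h | h : n % 12 = 1 ∨ n % 12 = 7 := by omega
  all_goals rw [h]; norm_num

lemma jacobi_neg_three_five {n : ℕ} (h : n % 6 = 5) : J(-3 | n) = -1 := by
  rw [jacobi_neg_three (by omega)]
  obtain h | h : n % 12 = 5 ∨ n % 12 = 11 := by omega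
  all_goals rw [h]; norm_num

lemma jacobi_neg_two {n : ℕ} (h : n % 8 = 3) : J(-2 | n) = 1 := by
  have := jacobiSym.mod_right (-2) (Nat.odd_iff.2 (by omega : n % 2 = 1))
  norm_num [h] at this
  exact this

lemma jacobi_neg_six {n : ℕ} (h : n % 24 = 5) : J(-6 | n) = 1 := by
  have := jacobiSym.mod_right (-6) (Nat.odd_iff.2 (by omega : n % 2 = 1))
  norm_num [h] at this
  exact this

lemma jacobi_neg {e p : ℕ} : J(-(e : ℤ) | p) = J(-1 | p) * J((e : ℤ) | p) := by
  rw [← jacobiSym.mul_left, neg_one_mul]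

/-! ### Primes in arithmetic progressions -/

lemma exists_prime_ap {q r : ℤ} (hq : 0 < q) (h : IsCoprime r q) :
    ∃ p k : ℕ, p.Prime ∧ (p : ℤ) = q * k + r := by
  lift q to ℕ using hq.le
  obtain ⟨p, hgt, hp, hmod⟩ :=
    Nat.forall_exists_prime_gt_and_zmodEq r.natAbs (by omega : q ≠ 0) h
  obtain ⟨k, hk⟩ := hmod.symm.dvd
  have hk0 : 0 ≤ k := by
    by_contra hneg
    have : (p : ℤ) - r > 0 := by omega
    nlinarith
  lift k to ℕ using hk0
  exact ⟨p, k, hp, by linarith⟩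

lemma exists_dvd_sq_add {e : ℤ} {p : ℕ} (hp : p.Prime) (h : J(-e | p) = 1) :
    ∃ b : ℤ, (p : ℤ) ∣ b ^ 2 + e := by
  have := Fact.mk hp
  obtain ⟨x, hx⟩ := ZMod.isSquare_of_jacobiSym_eq_one h
  obtain ⟨b, rfl⟩ := ZMod.intCast_surjective x
  refine ⟨b, (ZMod.intCast_zmod_eq_zero_iff_dvd _ p).1 ?_⟩
  push_cast at hx ⊢
  linear_combination -hx

/-- A root modulo `p` of `b² + e` may be prescribed modulo 6. -/
lemma exists_dvd_sq_add_mod {e : ℤ} {p : ℕ} (hp : p.Prime) (h2 : p % 2 = 1) (h3 : p % 3 ≠ 0)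
    (h : J(-e | p) = 1) (b₀ : ℤ) : ∃ b : ℤ, (p : ℤ) ∣ b ^ 2 + e ∧ 6 ∣ b - b₀ := by
  obtain ⟨b, hb⟩ := exists_dvd_sq_add hp h
  refine ⟨b + p * (p * (b₀ - b)), ?_, ?_⟩
  · have : (b + p * (p * (b₀ - b))) ^ 2 + e =
      b ^ 2 + e + p * ((p * (b₀ - b)) * (2 * b + p * (p * (b₀ - b)))) := by ring
    rw [this]
    exact dvd_add hb (dvd_mul_right _ _)
  · have h6 : (6 : ℤ) ∣ (p : ℤ) ^ 2 - 1 := by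
      obtain ⟨k, hk | hk⟩ : ∃ k : ℤ, (p : ℤ) = 6 * k + 1 ∨ (p : ℤ) = 6 * k - 1 := by
        obtain h | h : p % 6 = 1 ∨ p % 6 = 5 := by omega
        · exact ⟨p / 6, by omega⟩
        · exact ⟨p / 6 + 1, by omega⟩
      · exact ⟨6 * k ^ 2 + 2 * k, by rw [hk]; ring⟩
      · exact ⟨6 * k ^ 2 - 2 * k, by rw [hk]; ring⟩
    have : b + p * (p * (b₀ - b)) - b₀ = ((p : ℤ) ^ 2 - 1) * (b₀ - b) := by ring
    rw [this]
    exact h6.mul_right _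

lemma isCoprime_two {r : ℤ} (h : r % 2 = 1) : IsCoprime r 2 :=
  ⟨1, -(r / 2), by omega⟩

lemma isCoprime_three {r : ℤ} (h : r % 3 ≠ 0) : IsCoprime r 3 :=
  ((Int.prime_three.coprime_iff_not_dvd).2 (by omega)).symm

lemma isCoprime_eight {r : ℤ} (h : r % 2 = 1) : IsCoprime r 8 := by
  have := (isCoprime_two h).pow_right (n := 3)
  norm_num at this
  exact this

lemma isCoprime_twelve {r : ℤ} (h : r % 2 = 1) (h3 : r % 3 ≠ 0) : IsCoprime r 12 := by
  have := ((isCoprime_two h).pow_right (n := 2)).mul_right (isCoprime_three h3)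
  norm_num at this
  exact this

lemma isCoprime_twentyfour {r : ℤ} (h : r % 2 = 1) (h3 : r % 3 ≠ 0) : IsCoprime r 24 := by
  have := (isCoprime_eight h).mul_right (isCoprime_three h3)
  norm_num at this
  exact this

/-! ### The form `x² + y² + 3z²` -/

lemma repA_of_mod_three {n : ℕ} (hn : n % 3 ≠ 0) : RepA n := by
  have hcop : IsCoprime (4 * n - 3 : ℤ) (24 * n) := by
    refine (isCoprime_twentyfour (by omega) (by omega)).mul_right ?_
    obtain ⟨u, v, huv⟩ := isCoprime_three (r := n) (by omega)
    exact ⟨-v, u + 4 * v, by linear_combination huv⟩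
  obtain ⟨p, k, hp, hpk⟩ := exists_prime_ap (by omega) hcop
  have heq : (p : ℤ) = 4 * n * (6 * k + 1 : ℕ) - 3 := by push_cast; linear_combination hpk
  have hp4 : p % 4 = 1 := by
    rw [mul_assoc] at heq
    omega
  have hJ : J(-((6 * k + 1 : ℕ) : ℤ) | p) = 1 := by
    rw [jacobi_neg, jacobi_neg_one_one hp4, one_mul,
      jacobiSym.quadratic_reciprocity_one_mod_four' (Nat.odd_iff.2 (by omega)) hp4,
      jacobi_congr (b := -3) ⟨-(4 * n), by linear_combination -heq⟩,
      jacobi_neg_three_one (by omega)]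
  obtain ⟨b, hb⟩ := exists_dvd_sq_add hp hJ
  refine repA_of_dvd (e := 4 * (6 * k + 1 : ℕ)) (c := p) (s := 1) (b := 2 * b) (by omega)
    (by exact_mod_cast hp.pos) (by linear_combination -heq) ?_ (by omega)
  rw [show (2 * b) ^ 2 + 4 * ((6 * k + 1 : ℕ) : ℤ) = 4 * (b ^ 2 + (6 * k + 1 : ℕ)) by ring]
  exact hb.mul_left 4

lemma repA_of_mod_nine {n : ℕ} (hn : n % 9 = 3) : RepA n := by
  obtain ⟨m, rfl⟩ : ∃ m, n = 3 * m := ⟨n / 3, by omega⟩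
  obtain ⟨r, hr⟩ : ∃ r : ℤ, 3 * r = 4 * m - 1 := ⟨(4 * m - 1) / 3, by omega⟩
  have hcop : IsCoprime r (8 * m) :=
    (isCoprime_eight (by omega)).mul_right ⟨-3, 4, by linear_combination -hr⟩
  obtain ⟨p, k, hp, hpk⟩ := exists_prime_ap (by omega) hcop
  have heq : 3 * (p : ℤ) = 4 * m * (6 * k + 1 : ℕ) - 1 := by
    push_cast; linear_combination 3 * hpk + hr
  have hp4 : p % 4 = 1 := by
    rw [mul_assoc] at heq
    omega
  have hJ : J(-((6 * k + 1 : ℕ) : ℤ) | p) = 1 := by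
    rw [jacobi_neg, jacobi_neg_one_one hp4, one_mul,
      jacobiSym.quadratic_reciprocity_one_mod_four' (Nat.odd_iff.2 (by omega)) hp4]
    have h1 : J(-3 * (p : ℤ) | 6 * k + 1) = 1 := by
      rw [jacobi_congr (b := 1) ⟨4 * m, by linear_combination heq⟩, jacobiSym.one_left]
    rwa [jacobiSym.mul_left, jacobi_neg_three_one (by omega), one_mul] at h1
  obtain ⟨b, hb⟩ := exists_dvd_sq_add hp hJ
  refine repA_of_dvd (e := 4 * (6 * k + 1 : ℕ)) (c := p) (s := 3) (b := 2 * b) (by omega)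
    (by exact_mod_cast hp.pos) (by push_cast at *; linear_combination -3 * heq) ?_ (by omega)
  rw [show (2 * b) ^ 2 + 4 * ((6 * k + 1 : ℕ) : ℤ) = 4 * (b ^ 2 + (6 * k + 1 : ℕ)) by ring]
  exact hb.mul_left 4

/-! ### The form `x² + 2y² + 6z²` -/

lemma repB_two_mod_four {n : ℕ} (hn : n % 4 = 2) (hn3 : n % 3 ≠ 0) : RepB n := by
  have hcop : IsCoprime (5 * n - 3 : ℤ) (12 * n) := by
    refine (isCoprime_twelve (by omega) (by omega)).mul_right ?_
    obtain ⟨u, v, huv⟩ := isCoprime_three (r := n) (by omega)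
    exact ⟨-v, u + 5 * v, by linear_combination huv⟩
  obtain ⟨p, k, hp, hpk⟩ := exists_prime_ap (by omega) hcop
  have heq : (p : ℤ) = n * (12 * k + 5 : ℕ) - 3 := by push_cast; linear_combination hpk
  have hp4 : p % 4 = 3 := by
    rw [mul_assoc] at hpk
    omega
  have hJ : J(-((12 * k + 5 : ℕ) : ℤ) | p) = 1 := by
    rw [jacobi_neg, jacobi_neg_one_three hp4,
      jacobiSym.quadratic_reciprocity_one_mod_four (by omega) (Nat.odd_iff.2 (by omega)),
      jacobi_congr (b := -3) ⟨-n, by linear_combination -heq⟩, jacobi_neg_three_five (by omega)]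
    norm_num
  obtain ⟨b, hb⟩ := exists_dvd_sq_add hp hJ
  exact repB_of_dvd (by omega) (by exact_mod_cast hp.pos) (by linear_combination -heq) hb
    (Or.inl (by omega))

lemma repB_three_mod_four {n : ℕ} (hn : n % 4 = 3) (hn3 : n % 3 ≠ 0) : RepB n := by
  have hcop : IsCoprime (2 * n - 3 : ℤ) (24 * n) := by
    refine (isCoprime_twentyfour (by omega) (by omega)).mul_right ?_
    obtain ⟨u, v, huv⟩ := isCoprime_three (r := n) (by omega)
    exact ⟨-v, u + 2 * v, by linear_combination huv⟩
  obtain ⟨p, k, hp, hpk⟩ := exists_prime_ap (by omega) hcop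
  have heq : (p : ℤ) = 2 * n * (12 * k + 1 : ℕ) - 3 := by push_cast; linear_combination hpk
  have hp8 : p % 8 = 3 := by
    rw [mul_assoc] at hpk
    omega
  have hJ : J(-(2 * ((12 * k + 1 : ℕ) : ℤ)) | p) = 1 := by
    rw [← neg_mul, jacobiSym.mul_left, jacobi_neg_two hp8, one_mul,
      jacobiSym.quadratic_reciprocity_one_mod_four (by omega) (Nat.odd_iff.2 (by omega)),
      jacobi_congr (b := -3) ⟨-(2 * n), by linear_combination -heq⟩,
      jacobi_neg_three_one (by omega)]
  obtain ⟨b, hb⟩ := exists_dvd_sq_add hp hJ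
  exact repB_of_dvd (by omega) (by exact_mod_cast hp.pos) (by linear_combination -heq) hb
    (Or.inl (by omega))

lemma repB_one_mod_eight {n : ℕ} (hn : n % 8 = 1) (hn3 : n % 3 ≠ 0) : RepB n := by
  obtain ⟨r, hr⟩ : ∃ r : ℤ, 2 * r = 17 * n - 3 := ⟨(17 * n - 3) / 2, by omega⟩
  have hcop : IsCoprime r (12 * n) := by
    refine (isCoprime_twelve (by omega) (by omega)).mul_right ?_
    obtain ⟨u, v, huv⟩ := isCoprime_three (r := n) (by omega)
    exact ⟨-2 * v, u + 17 * v, by linear_combination huv - v * hr⟩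
  obtain ⟨p, k, hp, hpk⟩ := exists_prime_ap (by omega) hcop
  have heq : 2 * (p : ℤ) = n * (24 * k + 17 : ℕ) - 3 := by
    push_cast; linear_combination 2 * hpk + hr
  have hp4 : p % 4 = 3 ∧ p % 3 ≠ 0 := by
    rw [mul_assoc] at hpk
    omega
  have hJ : J(-((24 * k + 17 : ℕ) : ℤ) | p) = 1 := by
    rw [jacobi_neg, jacobi_neg_one_three hp4.1,
      jacobiSym.quadratic_reciprocity_one_mod_four (by omega) (Nat.odd_iff.2 (by omega))]
    have h1 : J(2 * (p : ℤ) | 24 * k + 17) = -1 := by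
      rw [jacobi_congr (b := -3) ⟨-n, by linear_combination -heq⟩, jacobi_neg_three_five (by omega)]
    rw [jacobiSym.mul_left, jacobiSym.mod_right 2 (Nat.odd_iff.2 (by omega))] at h1
    have h8 : (24 * k + 17) % 8 = 1 := by omega
    norm_num [h8] at h1
    norm_num [h1]
  obtain ⟨b, hb, hb6⟩ := exists_dvd_sq_add_mod hp (by omega) hp4.2 hJ 1
  refine repB_of_dvd (c := 2 * p) (e := (24 * k + 17 : ℕ)) (by omega) (by have := hp.pos; omega)
    (by linear_combination -heq) (b := b) ?_ (Or.inl (by omega))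
  refine IsCoprime.mul_dvd (isCoprime_two (by omega)).symm ?_ hb
  obtain ⟨l, hl⟩ := hb6
  exact ⟨18 * l ^ 2 + 6 * l + 12 * k + 9, by
    rw [show b = 6 * l + 1 by linarith]; push_cast; ring⟩

lemma repB_two_mod_four' {m : ℕ} (hm : m % 4 = 2) : RepB (3 * m) := by
  have hcop : IsCoprime (9 * m - 1 : ℤ) (12 * m) :=
    (isCoprime_twelve (by omega) (by omega)).mul_right ⟨-1, 9, by ring⟩
  obtain ⟨p, k, hp, hpk⟩ := exists_prime_ap (by omega) hcop
  have heq : (p : ℤ) = 3 * m * (4 * k + 3 : ℕ) - 1 := by push_cast; linear_combination hpk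
  have hp12 : p % 12 = 5 := by
    rw [mul_assoc] at hpk
    omega
  have hJ : J(-(3 * ((4 * k + 3 : ℕ) : ℤ)) | p) = 1 := by
    rw [← neg_mul, jacobiSym.mul_left, jacobi_neg_three_five (by omega),
      jacobiSym.quadratic_reciprocity_one_mod_four' (Nat.odd_iff.2 (by omega)) (by omega),
      jacobi_congr (b := -1) ⟨-(3 * m), by linear_combination -heq⟩,
      jacobi_neg_one_three (by omega)]
    norm_num
  obtain ⟨b, hb, hb6⟩ := exists_dvd_sq_add_mod hp (by omega) (by omega) hJ 0
  refine repB_of_dvd (c := 3 * p) (b := b) (e := 3 * (4 * k + 3 : ℕ)) (by omega)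
    (by have := hp.pos; omega) (by linear_combination -3 * heq) ?_ (Or.inr (by omega))
  refine IsCoprime.mul_dvd (isCoprime_three (by omega)).symm ?_ hb
  obtain ⟨l, hl⟩ := hb6
  exact ⟨12 * l ^ 2 + 4 * k + 3, by rw [show b = 6 * l by linarith]; push_cast; ring⟩

lemma repB_one_mod_four' {m : ℕ} (hm : m % 4 = 1) : RepB (3 * m) := by
  have hcop : IsCoprime (6 * m - 1 : ℤ) (24 * m) :=
    (isCoprime_twentyfour (by omega) (by omega)).mul_right ⟨-1, 6, by ring⟩
  obtain ⟨p, k, hp, hpk⟩ := exists_prime_ap (by omega) hcop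
  have heq : (p : ℤ) = 6 * m * (4 * k + 1 : ℕ) - 1 := by push_cast; linear_combination hpk
  have hp24 : p % 24 = 5 := by
    rw [mul_assoc] at hpk
    omega
  have hJ : J(-(6 * ((4 * k + 1 : ℕ) : ℤ)) | p) = 1 := by
    rw [← neg_mul, jacobiSym.mul_left, jacobi_neg_six hp24, one_mul,
      jacobiSym.quadratic_reciprocity_one_mod_four (by omega) (Nat.odd_iff.2 (by omega)),
      jacobi_congr (b := -1) ⟨-(6 * m), by linear_combination -heq⟩,
      jacobi_neg_one_one (by omega)]
  obtain ⟨b, hb, hb6⟩ := exists_dvd_sq_add_mod hp (by omega) (by omega) hJ 0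
  refine repB_of_dvd (c := 3 * p) (b := b) (e := 6 * (4 * k + 1 : ℕ)) (by omega)
    (by have := hp.pos; omega) (by linear_combination -3 * heq) ?_ (Or.inr (by omega))
  refine IsCoprime.mul_dvd (isCoprime_three (by omega)).symm ?_ hb
  obtain ⟨l, hl⟩ := hb6
  exact ⟨12 * l ^ 2 + 2 * (4 * k + 1), by rw [show b = 6 * l by linarith]; push_cast; ring⟩

lemma repB_three_mod_eight' {m : ℕ} (hm : m % 8 = 3) : RepB (3 * m) := by
  obtain ⟨r, hr⟩ : ∃ r : ℤ, 2 * r = 9 * m - 1 := ⟨(9 * m - 1) / 2, by omega⟩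
  have hcop : IsCoprime r (12 * m) :=
    (isCoprime_twelve (by omega) (by omega)).mul_right ⟨-2, 9, by linear_combination -hr⟩
  obtain ⟨p, k, hp, hpk⟩ := exists_prime_ap (by omega) hcop
  have heq : 2 * (p : ℤ) = 3 * m * (8 * k + 3 : ℕ) - 1 := by
    push_cast; linear_combination 2 * hpk + hr
  have hp12 : p % 12 = 1 := by
    rw [mul_assoc] at hpk
    omega
  have hJ : J(-(3 * ((8 * k + 3 : ℕ) : ℤ)) | p) = 1 := by
    rw [← neg_mul, jacobiSym.mul_left, jacobi_neg_three_one (by omega), one_mul,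
      jacobiSym.quadratic_reciprocity_one_mod_four' (Nat.odd_iff.2 (by omega)) (by omega)]
    have h1 : J(2 * (p : ℤ) | 8 * k + 3) = -1 := by
      rw [jacobi_congr (b := -1) ⟨-(3 * m), by linear_combination -heq⟩,
        jacobi_neg_one_three (by omega)]
    rw [jacobiSym.mul_left, jacobiSym.mod_right 2 (Nat.odd_iff.2 (by omega))] at h1
    have h8 : (8 * k + 3) % 8 = 3 := by omega
    norm_num [h8] at h1
    exact h1
  obtain ⟨b, hb, hb6⟩ := exists_dvd_sq_add_mod hp (by omega) (by omega) hJ 3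
  refine repB_of_dvd (c := 6 * p) (b := b) (e := 3 * (8 * k + 3 : ℕ)) (by omega)
    (by have := hp.pos; omega) (by linear_combination -3 * heq) ?_ (Or.inr (by omega))
  refine IsCoprime.mul_dvd ?_ ?_ hb
  · have := (isCoprime_two (r := p) (by omega)).mul_right (isCoprime_three (by omega))
    norm_num at this
    exact this.symm
  obtain ⟨l, hl⟩ := hb6
  exact ⟨6 * l ^ 2 + 6 * l + 4 * k + 3, by
    rw [show b = 6 * l + 3 by linarith]; push_cast; ring⟩

lemma repB_of_mod {n : ℤ} (h0 : 0 ≤ n) (h4 : n % 4 ≠ 0) (h8 : n % 8 ≠ 5) : RepB n := by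
  lift n to ℕ using h0
  by_cases h3 : n % 3 = 0
  · obtain ⟨m, rfl⟩ : ∃ m, n = 3 * m := ⟨n / 3, by omega⟩
    push_cast
    obtain h | h | h : m % 4 = 2 ∨ m % 4 = 1 ∨ m % 8 = 3 := by omega
    · exact repB_two_mod_four' h
    · exact repB_one_mod_four' h
    · exact repB_three_mod_eight' h
  · obtain h | h | h : n % 4 = 2 ∨ n % 4 = 3 ∨ n % 8 = 1 := by omega
    · exact repB_two_mod_four h h3
    · exact repB_three_mod_four h h3
    · exact repB_one_mod_eight h h3

lemma repA_of_mod {n : ℤ} (h0 : 0 ≤ n) (h9 : n % 9 ≠ 0) (h6 : n % 9 ≠ 6) : RepA n := by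
  lift n to ℕ using h0
  by_cases h3 : n % 3 = 0
  · exact repA_of_mod_nine (by omega)
  · exact repA_of_mod_three h3

lemma RepB.four_mul {n : ℤ} : RepB n → RepB (4 * n) := by
  rintro ⟨x, y, z, rfl⟩
  exact ⟨2 * x, 2 * y, 2 * z, by ring⟩

lemma RepA.nine_mul {n : ℤ} : RepA n → RepA (9 * n) := by
  rintro ⟨x, y, z, rfl⟩
  exact ⟨3 * x, 3 * y, 3 * z, by ring⟩

/-! ### The universal quaternary forms -/

/-- `n` is represented by `a x² + b y² + c (z² + z w + w²)`. -/
def QRep (a b c : ℕ) (n : ℤ) : Prop :=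
  ∃ x y z w : ℤ, n = a * x ^ 2 + b * y ^ 2 + c * (z ^ 2 + z * w + w ^ 2)

lemma QRep.of_sq_mul {a b c : ℕ} {n : ℤ} (d : ℤ) (h : QRep a b c n) : QRep a b c (d ^ 2 * n) := by
  obtain ⟨x, y, z, w, rfl⟩ := h
  exact ⟨d * x, d * y, d * z, d * w, by ring⟩

/-- It suffices to represent the integers that are not divisible by `d²`. -/
lemma rep_of_not_dvd {a b c : ℕ} (d : ℕ) (hd : 2 ≤ d)
    (h : ∀ n : ℕ, ¬ d ^ 2 ∣ n → QRep a b c n) (n : ℕ) : QRep a b c n := by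
  induction n using Nat.strong_induction_on with
  | _ n ih =>
    by_cases hn : d ^ 2 ∣ n
    · obtain ⟨m, rfl⟩ := hn
      rcases Nat.eq_zero_or_pos m with rfl | hm
      · exact ⟨0, 0, 0, 0, by simp⟩
      · have := (ih m (lt_mul_of_one_lt_left hm (by nlinarith))).of_sq_mul (d : ℤ)
        push_cast
        exact this
    · exact h n hn

-- `y² + 3z²` is the value of `z² + zw + w²` at `(y - z, 2z)`.

lemma rep_of_repA {b : ℕ} {n : ℤ} (y : ℤ) (h : RepA (n - b * y ^ 2)) : QRep 1 b 1 n := by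
  obtain ⟨x, u, v, huv⟩ := h
  exact ⟨x, y, u - v, 2 * v, by push_cast; linear_combination huv⟩

lemma rep_of_repB {b : ℕ} {n : ℤ} (y : ℤ) (h : RepB (n - b * y ^ 2)) : QRep 1 b 2 n := by
  obtain ⟨x, u, v, huv⟩ := h
  exact ⟨x, y, u - v, 2 * v, by push_cast; linear_combination huv⟩

lemma rep_of_repB_two_mul {b : ℕ} {n : ℤ} (y : ℤ) (h : RepB (2 * (n - b * y ^ 2))) :
    QRep 2 b 1 n := by
  obtain ⟨x, u, v, huv⟩ := h
  have hx : Even (x ^ 2) := ⟨n - b * y ^ 2 - u ^ 2 - 3 * v ^ 2, by linear_combination -huv⟩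
  obtain ⟨k, rfl⟩ := even_iff_exists_two_mul.1 ((Int.even_pow' two_ne_zero).1 hx)
  exact ⟨k, y, u - v, 2 * v, by
    push_cast; exact mul_left_cancel₀ two_ne_zero (by linear_combination huv)⟩

lemma repB_two_mul_of_mod {n : ℤ} (h0 : 0 ≤ n)
    (h : n % 8 = 4 ∨ (n % 4 ≠ 0 ∧ n % 16 ≠ 10)) : RepB (2 * n) := by
  by_cases h2 : n % 2 = 1
  · exact repB_of_mod (by omega) (by omega) (by omega)
  · obtain ⟨m, rfl⟩ : ∃ m, n = 2 * m := ⟨n / 2, by omega⟩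
    rw [← mul_assoc]
    exact (repB_of_mod (n := m) (by omega) (by omega) (by omega)).four_mul

lemma rep_one_one {b : ℕ} (hb1 : 1 ≤ b) (hb6 : b ≤ 6) (n : ℕ) : QRep 1 b 1 n := by
  refine rep_of_not_dvd 3 (by norm_num) (fun n hn => ?_) n
  by_cases h6 : n % 9 = 6
  · by_cases hb : b = 6
    · subst hb
      obtain ⟨m, rfl⟩ : ∃ m, n = 9 * m + 6 := ⟨n / 9, by omega⟩
      -- For `y = 1, 2` the remainder is `9 m` and `9 (m - 2)` respectively.
      rcases Nat.eq_zero_or_pos m with rfl | hm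
      · exact ⟨0, 1, 0, 0, by simp⟩
      by_cases hm' : m % 9 = 0 ∨ m % 9 = 6
      · apply rep_of_repA 2
        have := (repA_of_mod (n := (m : ℤ) - 2) (by omega) (by omega) (by omega)).nine_mul
        convert this using 1
        push_cast; ring
      · apply rep_of_repA 1
        have := (repA_of_mod (n := (m : ℤ)) (by omega) (by omega) (by omega)).nine_mul
        convert this using 1
        push_cast; ring
    · exact rep_of_repA 1 (repA_of_mod (by omega) (by omega) (by omega))
  · exact rep_of_repA 0 (repA_of_mod (by omega) (by omega) (by omega))

lemma rep_two_one {b : ℕ} (hb2 : 2 ≤ b) (hb10 : b ≤ 10) (n : ℕ) : QRep 2 b 1 n := by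
  refine rep_of_not_dvd 2 le_rfl (fun n hn => ?_) n
  by_cases h10 : n % 16 = 10
  · by_cases hb : b = 2 ∨ b = 10 ∧ 40 ≤ n
    · apply rep_of_repB_two_mul 2
      rcases hb with rfl | ⟨rfl, hn40⟩ <;> exact repB_two_mul_of_mod (by omega) (by omega)
    · by_cases hb' : b = 10
      · obtain rfl | rfl : n = 10 ∨ n = 26 := by omega
        · exact ⟨0, 1, 0, 0, by simp [hb']⟩
        · exact ⟨0, 1, 4, 0, by simp [hb']⟩
      · exact rep_of_repB_two_mul 1 (repB_two_mul_of_mod (by omega) (by omega))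
  · exact rep_of_repB_two_mul 0 (repB_two_mul_of_mod (by omega) (by omega))

lemma rep_one_two {b : ℕ} (hb1 : 1 ≤ b) (hb5 : b ≤ 5) (n : ℕ) : QRep 1 b 2 n := by
  refine rep_of_not_dvd 2 le_rfl (fun n hn => ?_) n
  by_cases h5 : n % 8 = 5
  · by_cases hb : b = 1 ∨ b = 5 ∧ 20 ≤ n
    · apply rep_of_repB 2
      rcases hb with rfl | ⟨rfl, hn20⟩ <;> exact repB_of_mod (by omega) (by omega) (by omega)
    · by_cases hb' : b = 5
      · obtain rfl | rfl : n = 5 ∨ n = 13 := by omega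
        · exact ⟨0, 1, 0, 0, by simp [hb']⟩
        · exact ⟨0, 1, 2, 0, by simp [hb']⟩
      · exact rep_of_repB 1 (repB_of_mod (by omega) (by omega) (by omega))
  · exact rep_of_repB 0 (repB_of_mod (by omega) (by omega) (by omega))

/-- If `n - 2y²` is not `2` modulo 3 and equals `x² + u² + 3v²`, then `x` or `u` is divisible
by 3, which gives a representation of `n - 2y²` by `x² + 3z² + 9w²`. -/
lemma rep_three_of_repA {n : ℤ} (y : ℤ) (h3 : (n - 2 * y ^ 2) % 3 ≠ 2)
    (h : RepA (n - 2 * y ^ 2)) : QRep 1 2 3 n := by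
  obtain ⟨x, u, v, huv⟩ := h
  have key : ∀ t : ℤ, (∃ k, t = 3 * k) ∨ ∃ k, t ^ 2 = 3 * k + 1 := by
    intro t
    obtain h | h | h : t % 3 = 0 ∨ t % 3 = 1 ∨ t % 3 = 2 := by omega
    · exact Or.inl ⟨t / 3, by omega⟩
    · obtain ⟨k, rfl⟩ : ∃ k, t = 3 * k + 1 := ⟨t / 3, by omega⟩
      exact Or.inr ⟨3 * k ^ 2 + 2 * k, by ring⟩
    · obtain ⟨k, rfl⟩ : ∃ k, t = 3 * k + 2 := ⟨t / 3, by omega⟩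
      exact Or.inr ⟨3 * k ^ 2 + 4 * k + 1, by ring⟩
  rcases key x with ⟨k, rfl⟩ | ⟨k, hk⟩
  · exact ⟨u, y, v - k, 2 * k, by push_cast; linear_combination huv⟩
  · rcases key u with ⟨l, rfl⟩ | ⟨l, hl⟩
    · exact ⟨x, y, v - l, 2 * l, by push_cast; linear_combination huv⟩
    · omega

lemma rep_one_two_three (n : ℕ) : QRep 1 2 3 n := by
  by_cases h0 : n % 3 = 1
  · exact rep_three_of_repA 0 (by omega) (repA_of_mod (by omega) (by omega) (by omega))
  by_cases hn : n = 0 ∨ n = 2 ∨ n = 8 ∨ n = 17 ∨ n = 26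
  · rcases hn with rfl | rfl | rfl | rfl | rfl
    · exact ⟨0, 0, 0, 0, by simp⟩
    · exact ⟨0, 1, 0, 0, by simp⟩
    · exact ⟨0, 2, 0, 0, by simp⟩
    · exact ⟨3, 2, 0, 0, by simp⟩
    · exact ⟨3, 2, 1, 1, by simp⟩
  by_cases h8 : n % 9 = 8
  · exact rep_three_of_repA 4 (by omega) (repA_of_mod (by omega) (by omega) (by omega))
  by_cases h2 : n % 9 = 2
  · exact rep_three_of_repA 2 (by omega) (repA_of_mod (by omega) (by omega) (by omega))
  · exact rep_three_of_repA 1 (by omega) (repA_of_mod (by omega) (by omega) (by omega))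

lemma rep_four_of_repB {n m : ℤ} (x : ℤ) (hn : n = x ^ 2 + 2 * m) (h : RepB m) : QRep 1 2 4 n := by
  obtain ⟨y, u, v, huv⟩ := h
  exact ⟨x, y, u - v, 2 * v, by push_cast; linear_combination hn + 2 * huv⟩

lemma rep_one_two_four (n : ℕ) : QRep 1 2 4 n := by
  refine rep_of_not_dvd 2 le_rfl (fun n hn => ?_) n
  by_cases h2 : n % 2 = 0
  · obtain ⟨k, rfl⟩ : ∃ k, n = 2 * k := ⟨n / 2, by omega⟩
    by_cases h5 : k % 8 = 5
    · exact rep_four_of_repB (m := k - 2) 2 (by push_cast; ring)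
        (repB_of_mod (by omega) (by omega) (by omega))
    · exact rep_four_of_repB (m := k) 0 (by push_cast; ring)
        (repB_of_mod (by omega) (by omega) (by omega))
  · obtain ⟨k, rfl⟩ : ∃ k, n = 2 * k + 1 := ⟨n / 2, by omega⟩
    by_cases h5 : k % 8 = 5
    · exact rep_four_of_repB (m := k - 4) 3 (by push_cast; ring)
        (repB_of_mod (by omega) (by omega) (by omega))
    by_cases h4 : k % 4 = 0
    · obtain ⟨j, rfl⟩ : ∃ j, k = 4 * j := ⟨k / 4, by omega⟩
      rcases Nat.eq_zero_or_pos j with rfl | hj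
      · exact ⟨1, 0, 0, 0, by simp⟩
      -- For `x = 1, 3, 5` the remainder is `8 j`, `8 (j - 1)`, `8 (j - 3)`.
      by_cases hj4 : j % 4 = 0
      · exact rep_four_of_repB (m := 4 * (j - 1)) 3 (by push_cast; ring)
          (repB_of_mod (by omega) (by omega) (by omega)).four_mul
      by_cases hj5 : j % 8 = 5
      · exact rep_four_of_repB (m := 4 * (j - 3)) 5 (by push_cast; ring)
          (repB_of_mod (by omega) (by omega) (by omega)).four_mul
      · exact rep_four_of_repB (m := 4 * j) 1 (by push_cast; ring)
          (repB_of_mod (by omega) (by omega) (by omega)).four_mul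
    · exact rep_four_of_repB (m := k) 1 (by push_cast; ring)
        (repB_of_mod (by omega) (by omega) (by omega))

/-! ### Necessity -/

lemma sq_small {x : ℤ} (h : x ^ 2 ≤ 10) : x ^ 2 = 0 ∨ x ^ 2 = 1 ∨ x ^ 2 = 4 ∨ x ^ 2 = 9 := by
  have h1 : x ≤ 3 := by nlinarith
  have h2 : -3 ≤ x := by nlinarith
  interval_cases x <;> simp

/-- The values up to 10 of the squares and of `z² + zw + w²` that can occur in a representation
of an integer `N ≤ 10`. -/
lemma small_values {a b c N : ℕ} (ha : 0 < a) (hb : 0 < b) (hc : 0 < c) (hN : N ≤ 10)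
    (h : QRep a b c N) : ∃ X Y Q : ℕ, N = a * X + b * Y + c * Q ∧ (X = 0 ∨ X = 1 ∨ X = 4 ∨ X = 9) ∧
      (Y = 0 ∨ Y = 1 ∨ Y = 4 ∨ Y = 9) ∧
      (Q = 0 ∨ Q = 1 ∨ Q = 3 ∨ Q = 4 ∨ Q = 7 ∨ Q = 9) := by
  obtain ⟨x, y, z, w, h⟩ := h
  obtain ⟨u, v, huv⟩ := exists_diag z w
  rw [huv] at h
  have hx := sq_nonneg x
  have hy := sq_nonneg y
  have hu := sq_nonneg u
  have hv := sq_nonneg v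
  have h1 : (a : ℤ) * x ^ 2 ≥ x ^ 2 := le_mul_of_one_le_left hx (by omega)
  have h2 : (b : ℤ) * y ^ 2 ≥ y ^ 2 := le_mul_of_one_le_left hy (by omega)
  have h3 : (c : ℤ) * (u ^ 2 + 3 * v ^ 2) ≥ u ^ 2 + 3 * v ^ 2 :=
    le_mul_of_one_le_left (by omega) (by omega)
  have hx' := sq_small (x := x) (by omega)
  have hy' := sq_small (x := y) (by omega)
  have hu' := sq_small (x := u) (by omega)
  have hv' := sq_small (x := v) (by omega)
  refine ⟨(x ^ 2).toNat, (y ^ 2).toNat, (u ^ 2 + 3 * v ^ 2).toNat, ?_, by omega, by omega,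
    by omega⟩
  zify
  rw [Int.toNat_of_nonneg hx, Int.toNat_of_nonneg hy, Int.toNat_of_nonneg (by omega), h]

lemma necessary {a b c : ℕ} (ha : 0 < a) (hb : 0 < b) (hc : 0 < c) (hab : a ≤ b)
    (h : ∀ n : ℕ, QRep a b c n) :
    (a = 1 ∧ c = 1 ∧ b ≤ 6) ∨ (a = 2 ∧ c = 1 ∧ b ≤ 10) ∨ (a = 1 ∧ c = 2 ∧ b ≤ 5) ∨
      (a = 1 ∧ b = 2 ∧ c = 3) ∨ (a = 1 ∧ b = 2 ∧ c = 4) := by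
  have key := fun N hN => small_values (N := N) ha hb hc hN (h N)
  have e1 : a = 1 ∨ c = 1 := by
    obtain ⟨X, Y, Q, hE, hX, hY, hQ⟩ := key 1 (by omega)
    rcases hX with rfl | rfl | rfl | rfl <;> rcases hY with rfl | rfl | rfl | rfl <;>
      first | omega | rcases hQ with rfl | rfl | rfl | rfl | rfl | rfl <;> omega
  by_cases hc1 : c = 1
  · subst hc1
    clear e1
    have e2 : a ≤ 2 := by
      by_contra ha3
      obtain ⟨X, Y, Q, hE, hX, hY, hQ⟩ := key 2 (by omega)
      rcases hX with rfl | rfl | rfl | rfl <;> rcases hY with rfl | rfl | rfl | rfl <;> omega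
    obtain rfl | rfl : a = 1 ∨ a = 2 := by omega
    · have e6 : b ≤ 6 := by
        by_contra hb7
        obtain ⟨X, Y, Q, hE, hX, hY, hQ⟩ := key 6 (by omega)
        rcases hY with rfl | rfl | rfl | rfl <;> omega
      exact Or.inl ⟨rfl, rfl, e6⟩
    · have e10 : b ≤ 10 := by
        by_contra hb11
        obtain ⟨X, Y, Q, hE, hX, hY, hQ⟩ := key 10 (by omega)
        rcases hY with rfl | rfl | rfl | rfl <;> omega
      exact Or.inr (Or.inl ⟨rfl, rfl, e10⟩)
  · obtain rfl : a = 1 := e1.resolve_right hc1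
    clear e1
    by_cases hc2 : c = 2
    · subst hc2
      have e5 : b ≤ 5 := by
        by_contra hb6
        obtain ⟨X, Y, Q, hE, hX, hY, hQ⟩ := key 5 (by omega)
        rcases hY with rfl | rfl | rfl | rfl <;> omega
      exact Or.inr (Or.inr (Or.inl ⟨rfl, rfl, e5⟩))
    · have e2 : b ≤ 2 := by
        by_contra hb3
        obtain ⟨X, Y, Q, hE, hX, hY, hQ⟩ := key 2 (by omega)
        rcases hY with rfl | rfl | rfl | rfl <;>
          rcases hQ with rfl | rfl | rfl | rfl | rfl | rfl <;> omega
      obtain rfl | rfl : b = 1 ∨ b = 2 := by omega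
      · have e3 : c = 3 := by
          obtain ⟨X, Y, Q, hE, hX, hY, hQ⟩ := key 3 (by omega)
          rcases hQ with rfl | rfl | rfl | rfl | rfl | rfl <;> omega
        subst e3
        obtain ⟨X, Y, Q, hE, hX, hY, hQ⟩ := key 6 (by omega)
        omega
      · have e5 : c ≤ 5 := by
          obtain ⟨X, Y, Q, hE, hX, hY, hQ⟩ := key 5 (by omega)
          rcases hQ with rfl | rfl | rfl | rfl | rfl | rfl <;> omega
        have hc5 : c ≠ 5 := by
          rintro rfl
          obtain ⟨X, Y, Q, hE, hX, hY, hQ⟩ := key 10 (by omega)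
          omega
        omega

theorem stmt_0 (a b c : ℕ) (ha : 0 < a) (hb : 0 < b) (hc : 0 < c) (hab : a ≤ b) :
    (∀ n : ℕ, ∃ x y z w : ℤ,
      (n : ℤ) = a * x ^ 2 + b * y ^ 2 + c * (z ^ 2 + z * w + w ^ 2)) ↔
    ((a = 1 ∧ c = 1 ∧ b ∈ ({1, 2, 3, 4, 5, 6} : Set ℕ)) ∨
     (a = 2 ∧ c = 1 ∧ b ∈ ({2, 3, 4, 5, 6, 7, 8, 9, 10} : Set ℕ)) ∨
     (a = 1 ∧ c = 2 ∧ b ∈ ({1, 2, 3, 4, 5} : Set ℕ)) ∨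
     (a = 1 ∧ b = 2 ∧ c = 3) ∨
     (a = 1 ∧ b = 2 ∧ c = 4)) := by
  simp only [Set.mem_insert_iff, Set.mem_singleton_iff]
  constructor
  · intro h
    have := necessary ha hb hc hab h
    omega
  · rintro (⟨rfl, rfl, h⟩ | ⟨rfl, rfl, h⟩ | ⟨rfl, rfl, h⟩ | ⟨rfl, rfl, rfl⟩ | ⟨rfl, rfl, rfl⟩)
    · exact rep_one_one (by omega) (by omega)
    · exact rep_two_one (by omega) (by omega)
    · exact rep_one_two (by omega) (by omega)
    · exact rep_one_two_three
    · exact rep_one_two_four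
end

section
/- Let a, b, c be positive integers with a ≤ b. If the quadratic form f^{a,b}_c(x,y,z,w) = a·x² + b·y² + c·(z² + z·w + w²) represents each of the integers 1, 2, 3, 5, 6, 10 (with x, y, z, w ∈ ℤ), then it represents every nonnegative integer. -/
/-!
Write `L(z, w) = z² + z w + w²`. Representing `1, 2, 3, 5, 6, 10` forces `(a, b, c)` to be one of 22
triples (`candidates`): `(1, b, 1)` with `b ≤ 6`, `(1, b, 2)` with `b ≤ 5`, `(2, b, 1)` with
`2 ≤ b ≤ 10`, and `(1, 2, 3)`, `(1, 2, 4)`. Each of these forms is shown to be universal.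

All but `(1, 3, 1)` contain a ternary form whose values are governed by the three-squares theorem:
for example `x² + 2 L` represents `n` once `3 n` is a sum of three squares, `2 x² + L` and
`x² + 2 y² + 3 z²` once `6 n` is, `x² + 2 y² + 4 z²` once `2 n` is, and `x² + z² + 5 y²` once `5 n` is.
Since values of a form are closed under multiplication by `4`, only `n` not divisible by `4` matter;
for those, the ternary form misses a few residue classes, and subtracting a suitable value in the
remaining variable leads out of them.

The three-squares theorem is proved following Dirichlet: the theorem on primes in arithmetic
progressions and quadratic reciprocity for the Jacobi symbol give `d > 0` such that `-d` is a square
modulo `d n - 1`. This yields a positive definite integral ternary form of determinant `1` that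
represents `n` (`three_squares_of_residue`), and Hermite reduction shows that all values of such a
form are sums of three squares (`ternary_three_squares`).

The form `(1, 3, 1)` takes the same values as a sum of two Eisenstein norms. Such sums are
multiplicative, and Lagrange's descent shows that every prime is one (`twoL_nat`).
-/

/-! ### Reduction of binary and ternary forms of determinant one -/

/-- Every residue class modulo `m` has a representative of absolute value at most `m / 2`. -/
theorem exists_centered (m : ℤ) (hm : 0 < m) (B : ℤ) : ∃ k : ℤ, 4 * (B + k * m) ^ 2 ≤ m ^ 2 := by
  refine ⟨-((2 * B + m) / (2 * m)), ?_⟩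
  have h1 := Int.emod_add_mul_ediv (2 * B + m) (2 * m)
  have h2 := Int.emod_nonneg (2 * B + m) (b := 2 * m) (by omega)
  have h3 := Int.emod_lt_of_pos (2 * B + m) (b := 2 * m) (by omega)
  have h4 : |2 * (B + -((2 * B + m) / (2 * m)) * m)| ≤ |m| := by
    rw [abs_of_pos hm, abs_le]; constructor <;> nlinarith
  have := sq_le_sq.2 h4
  linarith

/-- The inequality that makes Hermite's reduction of ternary forms of determinant `1` terminate: if
`a ≥ 2`, `|f| ≤ a / 2`, and `a b - f²` is positive with square at most `4 a / 3` (the bound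
from reducing a binary form of determinant `a`), then the diagonal coefficient `b` is smaller
than `a`. -/
theorem hermite_bound (a b f : ℤ) (ha : 2 ≤ a) (h2 : 0 < a * b - f ^ 2)
    (h3 : 3 * (a * b - f ^ 2) ^ 2 ≤ 4 * a) (hsq : 4 * f ^ 2 ≤ a ^ 2) : 0 < b ∧ b < a := by
  constructor
  · have : 0 < a * b := by nlinarith [sq_nonneg f]
    exact pos_of_mul_pos_right this (by omega)
  · by_contra hge
    push Not at hge
    have h5 : a * a ≤ a * b := by nlinarith
    obtain ⟨A, hA⟩ : ∃ A, A = a * b - f ^ 2 := ⟨_, rfl⟩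
    rw [← hA] at h2 h3
    have h6 : 3 * a ^ 2 ≤ 4 * A := by nlinarith
    have h7 : (3 * a ^ 2) ^ 2 ≤ (4 * A) ^ 2 := pow_le_pow_left₀ (by positivity) h6 2
    have h8 : a * (27 * a ^ 3) ≤ a * 64 := by nlinarith
    have h9 : 27 * a ^ 3 ≤ 64 := le_of_mul_le_mul_left h8 (by omega)
    have : (2 : ℤ) ^ 3 ≤ a ^ 3 := pow_le_pow_left₀ (by norm_num) ha 3
    omega

/-- Gauss reduction: a positive definite form `A x² + 2 B x y + C y²` of determinant `D` takes, at the
first column `(p, q)` of some matrix in `SL₂(ℤ)`, a value whose square is at most `4 D / 3`.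
`N` only bounds `A`, for the induction. -/
theorem binary_reduction (D : ℤ) (hD : 0 < D) : ∀ (N : ℕ) (A B C : ℤ), A.toNat ≤ N → 0 < A →
    A * C - B ^ 2 = D → ∃ p q r s : ℤ, p * s - q * r = 1 ∧
      0 < A * p ^ 2 + 2 * B * p * q + C * q ^ 2 ∧
      3 * (A * p ^ 2 + 2 * B * p * q + C * q ^ 2) ^ 2 ≤ 4 * D := by
  intro N
  induction N with
  | zero => intro A B C h1 h2; omega
  | succ N ih =>
    intro A B C hN hA hdet
    obtain ⟨k, hsq⟩ := exists_centered A hA B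
    set B' := B + k * A with hB'
    set C' := A * k ^ 2 + 2 * B * k + C with hC'
    have hdet' : A * C' - B' ^ 2 = D := by rw [hB', hC', ← hdet]; ring
    have hC'pos : 0 < C' := by
      have : 0 < A * C' := by nlinarith [sq_nonneg B']
      exact pos_of_mul_pos_right this hA.le
    rcases lt_or_ge C' A with hlt | hge
    · obtain ⟨p, q, r, s, h1, h2, h3⟩ := ih C' (-B') A (by omega) hC'pos (by linarith)
      have e : C' * p ^ 2 + 2 * (-B') * p * q + A * q ^ 2 =
          A * (k * p - q) ^ 2 + 2 * B * (k * p - q) * p + C * p ^ 2 := by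
        rw [hB', hC']; ring
      rw [e] at h2 h3
      exact ⟨k * p - q, p, k * r - s, r, by linarith, h2, h3⟩
    · refine ⟨1, 0, 0, 1, by norm_num, by simpa using hA, ?_⟩
      have : A * A ≤ A * C' := by nlinarith
      nlinarith

/-- A positive definite binary form of determinant `1` takes only sums of two squares as values. -/
theorem binary_two_squares (A B C : ℤ) (hA : 0 < A) (h : A * C - B ^ 2 = 1) (x y : ℤ) :
    ∃ u v : ℤ, A * x ^ 2 + 2 * B * x * y + C * y ^ 2 = u ^ 2 + v ^ 2 := by
  obtain ⟨p, q, r, s, h1, h2, h3⟩ := binary_reduction 1 one_pos _ A B C le_rfl hA h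
  have h4 : A * p ^ 2 + 2 * B * p * q + C * q ^ 2 = 1 := by nlinarith
  -- coordinates of `(x, y)` in the basis `(p, q)`, `(r, s)`
  refine ⟨(s * x - r * y) + (A * p * r + B * (p * s + q * r) + C * q * s) * (p * y - q * x),
    p * y - q * x, ?_⟩
  have key : A * r ^ 2 + 2 * B * r * s + C * s ^ 2
      = (A * p * r + B * (p * s + q * r) + C * q * s) ^ 2 + 1 := by
    linear_combination (-(A * r ^ 2 + 2 * B * r * s + C * s ^ 2)) * h4 + (p*s-q*r)^2 * h +
      (p * s - q * r + 1) * h1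
  set β := A * p * r + B * (p * s + q * r) + C * q * s with hβ
  have ex : x = p * (s * x - r * y) + r * (p * y - q * x) := by linear_combination (-x) * h1
  have ey : y = q * (s * x - r * y) + s * (p * y - q * x) := by linear_combination (-y) * h1
  generalize s * x - r * y = X at *
  generalize p * y - q * x = Y at *
  rw [ex, ey]
  linear_combination X ^ 2 * h4 + Y ^ 2 * key - 2 * X * Y * hβ

/-- A positive definite ternary form of determinant `1` takes only sums of three squares as values.
Hermite's descent: as long as the leading coefficient `a` exceeds `1`, a change of basis makes it
smaller; for `a = 1` a square splits off. `N` only bounds `a`, for the induction. -/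
theorem ternary_three_squares : ∀ (N : ℕ) (a b c d e f : ℤ), a.toNat ≤ N → 0 < a →
    0 < a * b - f ^ 2 →
    a * b * c + 2 * d * e * f - a * d ^ 2 - b * e ^ 2 - c * f ^ 2 = 1 → ∀ x y z : ℤ,
    ∃ u v w : ℤ, a * x ^ 2 + b * y ^ 2 + c * z ^ 2 + 2 * d * y * z + 2 * e * x * z + 2 * f * x * y
      = u ^ 2 + v ^ 2 + w ^ 2 := by
  intro N
  induction N with
  | zero => intro a b c d e f h1 h2; omega
  | succ N ih =>
    intro a b c d e f hN ha hab hdet x y z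
    rcases eq_or_ne a 1 with rfl | ha1
    · obtain ⟨u, v, huv⟩ := binary_two_squares (b - f ^ 2) (d - e * f) (c - e ^ 2)
        (by linarith) (by linear_combination hdet) y z
      exact ⟨x + f * y + e * z, u, v, by linear_combination huv⟩
    obtain ⟨p, q, r, s, h1, h2, h3⟩ := binary_reduction a ha _ (a * b - f ^ 2) (a * d - e * f)
      (a * c - e ^ 2) le_rfl hab (by linear_combination a * hdet)
    -- the new second basis vector is `(k, p, q)`
    obtain ⟨k, hsq⟩ := exists_centered a ha (f * p + e * q)
    obtain ⟨f', hf'⟩ : ∃ f', f' = f * p + e * q + k * a := ⟨_, rfl⟩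
    obtain ⟨b', hb'⟩ : ∃ b', b' = a * k ^ 2 + b * p ^ 2 + c * q ^ 2 + 2 * d * p * q +
      2 * e * k * q + 2 * f * k * p := ⟨_, rfl⟩
    have e1 : (a * b - f ^ 2) * p ^ 2 + 2 * (a * d - e * f) * p * q + (a * c - e ^ 2) * q ^ 2
        = a * b' - f' ^ 2 := by rw [hf', hb']; ring
    rw [← hf'] at hsq
    rw [e1] at h2 h3
    obtain ⟨hb'pos, hlt⟩ := hermite_bound a b' f' (by omega) h2 h3 hsq
    -- the form in the basis `(k, p, q)`, `(1, 0, 0)`, `(0, r, s)`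
    obtain ⟨u, v, w, H⟩ := ih b' a (b * r ^ 2 + c * s ^ 2 + 2 * d * r * s) (e * s + f * r)
      (b * p * r + c * q * s + d * (p * s + q * r) + e * k * s + f * k * r) f'
      (by omega) hb'pos (by linarith) (by
        rw [hf', hb']
        linear_combination (p * s - q * r) ^ 2 * hdet + (p * s - q * r + 1) * h1)
      (s * y - r * z) (x - k * (s * y - r * z)) (p * z - q * y)
    refine ⟨u, v, w, Eq.trans ?_ H⟩
    clear H e1 h2 h3 hdet hab hsq hlt hb'pos ih
    have ex : y = p * (s * y - r * z) + r * (p * z - q * y) := by linear_combination (-y) * h1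
    have ey : z = q * (s * y - r * z) + s * (p * z - q * y) := by linear_combination (-z) * h1
    generalize s * y - r * z = X at *
    generalize p * z - q * y = Y at *
    rw [ex, ey, hf', hb']
    ring

/-! ### The three-squares theorem -/

/-- If `-d` is a square modulo `d n - 1`, then `n` is the last diagonal entry of a positive definite
integral `3 × 3` matrix of determinant `1`, namely
`[[t, b, 1], [b, d n - 1, 0], [1, 0, n]]` with `b² + d = (d n - 1) t`. -/
theorem three_squares_of_residue (n d b : ℤ) (hd : 0 < d) (hn : 1 < d * n)
    (h : d * n - 1 ∣ b ^ 2 + d) : ∃ x y z : ℤ, n = x ^ 2 + y ^ 2 + z ^ 2 := by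
  obtain ⟨t, ht⟩ := h
  have htpos : 0 < t := by
    have : 0 < (d * n - 1) * t := by rw [← ht]; positivity
    exact pos_of_mul_pos_right this (by linarith)
  obtain ⟨u, v, w, H⟩ := ternary_three_squares _ t (d * n - 1) n 0 1 b le_rfl htpos
    (by linarith) (by linear_combination (-n) * ht) 0 0 1
  exact ⟨u, v, w, by linear_combination H⟩

open NumberTheorySymbols in
theorem exists_sq_of_jacobi (p : ℕ) (hp : p.Prime) (d : ℤ) (h : J(d | p) = 1) :
    ∃ b : ℤ, (p : ℤ) ∣ b ^ 2 - d := by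
  have := Fact.mk hp
  rw [← jacobiSym.legendreSym.to_jacobiSym] at h
  have h0 : (d : ZMod p) ≠ 0 := by
    intro h0
    rw [(legendreSym.eq_zero_iff p d).2 h0] at h
    norm_num at h
  obtain ⟨x, hx⟩ := (legendreSym.eq_one_iff p h0).1 h
  obtain ⟨b, rfl⟩ := ZMod.intCast_surjective x
  refine ⟨b, ?_⟩
  rw [← ZMod.intCast_zmod_eq_zero_iff_dvd]
  push_cast
  rw [hx]; ring

open NumberTheorySymbols in
/-- Dirichlet's theorem gives a prime `p = d n - 1` with `d ≡ 1 (mod 4)`, and reciprocity gives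
`(-d / p) = (p / d) = (-1 / d) = 1`. -/
theorem three_squares_two_mod_four (n : ℕ) (hn : n % 4 = 2) :
    ∃ x y z : ℤ, (n : ℤ) = x ^ 2 + y ^ 2 + z ^ 2 := by
  have hcop : (n - 1).Coprime (4 * n) := by
    have h1 : (n - 1).Coprime n := by
      have := Nat.coprime_self_add_right (m := n - 1) (n := 1)
      rw [Nat.sub_add_cancel (by omega)] at this
      simpa using this
    have h2 : (n - 1).Coprime 2 := (Nat.coprime_two_right).2 (Nat.odd_iff.2 (by omega))
    exact Nat.Coprime.mul_right (by simpa using h2.pow_right 2) h1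
  obtain ⟨p, hgt, hp, hmod⟩ := Nat.forall_exists_prime_gt_and_modEq n (by omega) hcop
  obtain ⟨j, hj⟩ := (Nat.modEq_iff_dvd' (by omega)).1 hmod.symm
  set d := 4 * j + 1 with hd
  have hpd : p + 1 = d * n := by
    have : p = 4 * n * j + (n - 1) := by omega
    rw [this, hd]
    have : 4 * n * j + (n - 1) + 1 = 4 * n * j + n := by omega
    rw [this]; ring
  have hp4 : p % 4 = 1 := by
    have : p = 4 * (n * j) + (n - 1) := by rw [← mul_assoc]; omega
    omega
  have hpd' : (d : ℤ) * n = p + 1 := by exact_mod_cast hpd.symm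
  have hJ : J(-(d : ℤ) | p) = 1 := by
    rw [jacobiSym.neg _ (Nat.odd_iff.2 (by omega)), ZMod.χ₄_nat_one_mod_four hp4, one_mul,
      jacobiSym.quadratic_reciprocity_one_mod_four' (Nat.odd_iff.2 (by omega)) hp4,
      jacobiSym.mod_left' (a₂ := -1), jacobiSym.at_neg_one (Nat.odd_iff.2 (by omega)),
      ZMod.χ₄_nat_one_mod_four (by omega)]
    exact Int.modEq_iff_dvd.2 ⟨-n, by linear_combination hpd'⟩
  obtain ⟨b, hb⟩ := exists_sq_of_jacobi p hp _ hJ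
  refine three_squares_of_residue n d b (by omega) ?_ ?_
  · have := hp.two_le; rw [hpd']; omega
  · rw [hpd']; simpa using hb

open NumberTheorySymbols in
/-- Dirichlet's theorem gives a prime `p` with `2 p = d n - 1` and `d ≡ c (mod 8)`, and reciprocity
gives `(-d / p) = (p / d) = (-2 / d) = 1`. The value of `c` is chosen so that `p` is odd, that
`d` is `1` or `3` modulo `8`, and that `d ≡ 3 (mod 4)` whenever `p ≡ 3 (mod 4)`. -/
theorem three_squares_odd (n c : ℕ)
    (hc : n % 8 = 3 ∧ c = 1 ∨ (n % 8 = 1 ∨ n % 8 = 5) ∧ c = 3) :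
    ∃ x y z : ℤ, (n : ℤ) = x ^ 2 + y ^ 2 + z ^ 2 := by
  obtain ⟨m, hm⟩ : ∃ m, 2 * m + 1 = c * n := by
    rcases hc with ⟨h, rfl⟩ | ⟨h, rfl⟩
    · exact ⟨(1 * n - 1) / 2, by omega⟩
    · exact ⟨(3 * n - 1) / 2, by omega⟩
  have hm2 : m % 2 = 1 := by rcases hc with ⟨h, rfl⟩ | ⟨h, rfl⟩ <;> omega
  have hcop : m.Coprime (4 * n) := by
    have h1 : m.Coprime n := by
      rw [← Nat.isCoprime_iff_coprime]
      exact ⟨-2, c, by have : (2 * m + 1 : ℤ) = c * n := by exact_mod_cast hm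
                       linarith⟩
    have h2 : m.Coprime 2 := (Nat.coprime_two_right).2 (Nat.odd_iff.2 (by omega))
    exact Nat.Coprime.mul_right (by simpa using h2.pow_right 2) h1
  obtain ⟨p, hgt, hp, hmod⟩ := Nat.forall_exists_prime_gt_and_modEq m (by omega) hcop
  obtain ⟨j, hj⟩ := (Nat.modEq_iff_dvd' hgt.le).1 hmod.symm
  have hpj : p = 4 * (n * j) + m := by rw [← mul_assoc]; omega
  obtain ⟨d, hd⟩ : ∃ d, d = 8 * j + c := ⟨_, rfl⟩
  have hpd : 2 * p + 1 = d * n := by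
    rw [hpj, hd]; linear_combination hm
  have hpd' : (d : ℤ) * n = 2 * p + 1 := by exact_mod_cast hpd.symm
  have hd8 : d % 8 = 1 ∨ d % 8 = 3 := by omega
  have hdodd : Odd d := Nat.odd_iff.2 (by omega)
  have hpodd : Odd p := Nat.odd_iff.2 (by omega)
  have h1 : J((p : ℤ) | d) = 1 := by
    have e2 : J(-2 | d) = 1 := by
      rw [jacobiSym.at_neg_two hdodd, ZMod.χ₈'_nat_eq_if_mod_eight]
      rcases hd8 with h | h <;> simp [h] <;> omega
    have e3 : J(-2 * p | d) = J(1 | d) :=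
      jacobiSym.mod_left' (Int.modEq_iff_dvd.2 ⟨n, by linear_combination -hpd'⟩)
    rw [jacobiSym.mul_left, e2, jacobiSym.one_left, one_mul] at e3
    exact e3
  have hJ : J(-(d : ℤ) | p) = 1 := by
    rw [jacobiSym.neg _ hpodd]
    by_cases hp4 : p % 4 = 1
    · rw [ZMod.χ₄_nat_one_mod_four hp4, one_mul,
        jacobiSym.quadratic_reciprocity_one_mod_four' hdodd hp4, h1]
    · have hp4' : p % 4 = 3 := by have := Nat.odd_iff.1 hpodd; omega
      have hd4 : d % 4 = 3 := by
        rcases hc with ⟨h, rfl⟩ | ⟨h, rfl⟩ <;> omega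
      rw [ZMod.χ₄_nat_three_mod_four hp4',
        jacobiSym.quadratic_reciprocity_three_mod_four hd4 hp4', h1]
      norm_num
  obtain ⟨b, hb⟩ := exists_sq_of_jacobi p hp _ hJ
  -- `b` may be taken odd, since `p` is odd
  obtain ⟨b', hbp, hodd⟩ : ∃ b' : ℤ, (p : ℤ) ∣ b' ^ 2 + d ∧ b' % 2 = 1 := by
    rcases Int.emod_two_eq_zero_or_one b with h | h
    · refine ⟨b + p, ?_, by have := Nat.odd_iff.1 hpodd; omega⟩
      have : (b + p) ^ 2 + (d : ℤ) = (b ^ 2 - -(d : ℤ)) + p * (2 * b + p) := by ring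
      rw [this]
      exact dvd_add hb (dvd_mul_right _ _)
    · exact ⟨b, by simpa using hb, h⟩
  refine three_squares_of_residue n d b' (by omega) (by have := hp.two_le; omega) ?_
  have h2 : (2 : ℤ) ∣ b' ^ 2 + d := by
    apply Int.dvd_of_emod_eq_zero
    have : b' ^ 2 % 2 = 1 := by simp [pow_two, Int.mul_emod, hodd]
    omega
  have hcop2 : IsCoprime (2 : ℤ) p := by
    have : Nat.Coprime 2 p := (Nat.coprime_two_left).2 hpodd
    exact_mod_cast Nat.isCoprime_iff_coprime.2 this
  rw [hpd', add_sub_cancel_right]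
  exact hcop2.mul_dvd h2 hbp

/-- `n` is a sum of three integer squares. -/
def ThreeSq (n : ℕ) : Prop := ∃ x y z : ℤ, (n : ℤ) = x ^ 2 + y ^ 2 + z ^ 2

theorem threeSq_of_mod (n : ℕ)
    (h : n % 8 = 1 ∨ n % 8 = 2 ∨ n % 8 = 3 ∨ n % 8 = 5 ∨ n % 8 = 6) : ThreeSq n := by
  rcases h with h | h | h | h | h
  · exact three_squares_odd n 3 (by omega)
  · exact three_squares_two_mod_four n (by omega)
  · exact three_squares_odd n 1 (by omega)
  · exact three_squares_odd n 3 (by omega)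
  · exact three_squares_two_mod_four n (by omega)

/-- The case `n = 4 m` with `m` covered by `threeSq_of_mod`. -/
theorem threeSq_four_mul_of_mod (n : ℕ) (h : n % 32 = 4 ∨ n % 32 = 8 ∨ n % 32 = 12 ∨ n % 32 = 20 ∨
    n % 32 = 24) : ThreeSq n := by
  obtain ⟨m, rfl⟩ : ∃ m, n = 4 * m := ⟨n / 4, by omega⟩
  obtain ⟨x, y, z, hm⟩ := threeSq_of_mod m (by omega)
  exact ⟨2 * x, 2 * y, 2 * z, by push_cast; linear_combination 4 * hm⟩

/-! ### Ternary forms related to the sum of three squares -/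

theorem exists_sign_mod_three (X : ℤ) : ∃ X' : ℤ, X' ^ 2 = X ^ 2 ∧
    (X' % 3 = 0 ∧ X ^ 2 % 3 = 0 ∨ X' % 3 = 1 ∧ X ^ 2 % 3 = 1) := by
  have h : X % 3 = 0 ∨ X % 3 = 1 ∨ X % 3 = 2 := by omega
  rcases h with h | h | h
  · exact ⟨X, rfl, Or.inl ⟨h, by simp [pow_two, Int.mul_emod, h]⟩⟩
  · exact ⟨X, rfl, Or.inr ⟨h, by simp [pow_two, Int.mul_emod, h]⟩⟩
  · exact ⟨-X, by ring, Or.inr ⟨by omega, by simp [pow_two, Int.mul_emod, h]⟩⟩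

/-- If a sum of three squares is divisible by `3`, signs can be chosen so that the three numbers are
congruent modulo `3`. -/
theorem exists_congr_mod_three (A B C : ℤ) (h : (A ^ 2 + B ^ 2 + C ^ 2) % 3 = 0) :
    ∃ A' B' C' : ℤ, A' ^ 2 + B' ^ 2 + C' ^ 2 = A ^ 2 + B ^ 2 + C ^ 2 ∧
      3 ∣ A' - B' ∧ 3 ∣ B' - C' := by
  obtain ⟨A', hA, hA'⟩ := exists_sign_mod_three A
  obtain ⟨B', hB, hB'⟩ := exists_sign_mod_three B
  obtain ⟨C', hC, hC'⟩ := exists_sign_mod_three C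
  refine ⟨A', B', C', by rw [hA, hB, hC], ?_, ?_⟩ <;>
  · generalize A ^ 2 = a at *
    generalize B ^ 2 = b at *
    generalize C ^ 2 = c at *
    omega

theorem sq_parity (X : ℤ) : X ^ 2 % 2 = X % 2 := by
  rcases Int.emod_two_eq_zero_or_one X with h | h <;> simp [pow_two, Int.mul_emod, h]

/-- The identity behind this is
`3 (A² + B² + C²) = (A + B + C)² + 2 L(A - B, B - C)`, where `L(z, w) = z² + z w + w²`. -/
theorem rep_one_A2 (n : ℕ) (h : ThreeSq (3 * n)) :
    ∃ x z w : ℤ, (n : ℤ) = x ^ 2 + 2 * (z ^ 2 + z * w + w ^ 2) := by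
  obtain ⟨A, B, C, h⟩ := h
  push_cast at h
  obtain ⟨A', B', C', h1, ⟨u, hu⟩, ⟨v, hv⟩⟩ := exists_congr_mod_three A B C (by omega)
  refine ⟨C' + 2 * v + u, u, v, ?_⟩
  have hB : B' = C' + 3 * v := by linarith
  have hA : A' = C' + 3 * v + 3 * u := by linarith
  rw [← h1, hA, hB] at h
  linarith

/-- If `2 n = x² + 2 L`, then `x` is even, so this follows from `rep_one_A2` at `2 n`. -/
theorem rep_two_L (n : ℕ) (h : ThreeSq (6 * n)) :
    ∃ x z w : ℤ, (n : ℤ) = 2 * x ^ 2 + 1 * (z ^ 2 + z * w + w ^ 2) := by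
  obtain ⟨x, z, w, h⟩ := rep_one_A2 (2 * n) (by rw [← mul_assoc]; exact h)
  push_cast at h
  have := sq_parity x
  obtain ⟨t, rfl⟩ : ∃ t, x = 2 * t := ⟨x / 2, by omega⟩
  exact ⟨t, z, w, by linarith⟩

/-- The vectors `(1, 1, 1)`, `(1, -1, 0)`, `(1, 1, -2)` are orthogonal of norms `3`, `2`, `6`. A vector
of norm `6 n` has, after a change of signs and order, coordinates `2 y`, `3 z`, `x` with respect to
them. -/
theorem rep_one_two_three_s1 (n : ℕ) (h : ThreeSq (6 * n)) :
    ∃ x y z : ℤ, (n : ℤ) = x ^ 2 + 2 * y ^ 2 + 3 * z ^ 2 := by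
  obtain ⟨A, B, C, h⟩ := h
  push_cast at h
  obtain ⟨A, B, C, h1, hu, hv⟩ := exists_congr_mod_three A B C (by omega)
  rw [← h1] at h
  clear h1
  have main : ∀ A B C : ℤ, 6 * (n : ℤ) = A ^ 2 + B ^ 2 + C ^ 2 → 6 ∣ A - B → 3 ∣ B - C → 2 ∣ C →
      ∃ x y z : ℤ, (n : ℤ) = x ^ 2 + 2 * y ^ 2 + 3 * z ^ 2 := by
    rintro A B C h ⟨y, hy⟩ h3 ⟨c, hc⟩
    have pA := sq_parity A
    have pB := sq_parity B
    have pC := sq_parity C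
    obtain ⟨w, hw⟩ : ∃ w, A + B + C = 6 * w := ⟨(A + B + C) / 6, by omega⟩
    refine ⟨w - c, w, y, ?_⟩
    have hB : B = 3 * w - 3 * y - c := by linarith
    have hA : A = 3 * w + 3 * y - c := by linarith
    rw [hA, hB, hc] at h
    linarith
  have pA := sq_parity A
  have pB := sq_parity B
  have pC := sq_parity C
  have : (C % 2 = 0 ∧ A % 2 = B % 2) ∨ (A % 2 = 0 ∧ B % 2 = C % 2) ∨
      (B % 2 = 0 ∧ A % 2 = C % 2) := by omega
  rcases this with hh | hh | hh
  · exact main A B C h (by omega) (by omega) (by omega)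
  · exact main B C A (by linarith) (by omega) (by omega) (by omega)
  · exact main A C B (by linarith) (by omega) (by omega) (by omega)

theorem exists_even_and_same_parity (A B C : ℤ) (h : (A ^ 2 + B ^ 2 + C ^ 2) % 2 = 0) :
    ∃ A' B' C' : ℤ, A' ^ 2 + B' ^ 2 + C' ^ 2 = A ^ 2 + B ^ 2 + C ^ 2 ∧ 2 ∣ C' ∧ 4 ∣ A' - B' := by
  have main : ∀ A B C : ℤ, C % 2 = 0 → A % 2 = 1 → B % 2 = 1 →
    ∃ A' B' C' : ℤ, A' ^ 2 + B' ^ 2 + C' ^ 2 = A ^ 2 + B ^ 2 + C ^ 2 ∧ 2 ∣ C' ∧ 4 ∣ A' - B' := by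
    intro A B C hC hA hB
    rcases (by omega : A % 4 = B % 4 ∨ (A + B) % 4 = 0) with h | h
    · exact ⟨A, B, C, rfl, by omega, by omega⟩
    · exact ⟨A, -B, C, by ring, by omega, by omega⟩
  have pA := sq_parity A
  have pB := sq_parity B
  have pC := sq_parity C
  have cases : (C % 2 = 0 ∧ A % 2 = 1 ∧ B % 2 = 1) ∨ (A % 2 = 0 ∧ B % 2 = 1 ∧ C % 2 = 1) ∨
      (B % 2 = 0 ∧ A % 2 = 1 ∧ C % 2 = 1) ∨ (A % 2 = 0 ∧ B % 2 = 0 ∧ C % 2 = 0) := by omega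
  rcases cases with ⟨h1, h2, h3⟩ | ⟨h1, h2, h3⟩ | ⟨h1, h2, h3⟩ | ⟨h1, h2, h3⟩
  · exact main A B C h1 h2 h3
  · obtain ⟨a, b, c, e, r⟩ := main B C A h1 h2 h3
    exact ⟨a, b, c, by linarith, r⟩
  · obtain ⟨a, b, c, e, r⟩ := main A C B h1 h2 h3
    exact ⟨a, b, c, by linarith, r⟩
  · -- among the three halves two have the same parity
    rcases (by omega : A % 4 = B % 4 ∨ B % 4 = C % 4 ∨ A % 4 = C % 4) with h | h | h
    · exact ⟨A, B, C, rfl, by omega, by omega⟩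
    · exact ⟨B, C, A, by ring, by omega, by omega⟩
    · exact ⟨A, C, B, by ring, by omega, by omega⟩

/-- Uses `2 (x² + 2 y² + 4 z²) = (x + 2 z)² + (x - 2 z)² + (2 y)²`. -/
theorem rep_one_two_four_s1 (n : ℕ) (h : ThreeSq (2 * n)) :
    ∃ x y z : ℤ, (n : ℤ) = x ^ 2 + 2 * y ^ 2 + 4 * z ^ 2 := by
  obtain ⟨A, B, C, h⟩ := h
  push_cast at h
  obtain ⟨A', B', C', h1, ⟨y, hy⟩, ⟨z, hz⟩⟩ := exists_even_and_same_parity A B C (by omega)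
  refine ⟨B' + 2 * z, y, z, ?_⟩
  have hA : A' = B' + 4 * z := by linarith
  rw [← h1, hA, hy] at h
  linarith

theorem rep_one_one_two (n : ℕ) (h : ThreeSq (2 * n)) :
    ∃ x y z : ℤ, (n : ℤ) = x ^ 2 + 2 * y ^ 2 + z ^ 2 := by
  obtain ⟨x, y, z, h⟩ := rep_one_two_four_s1 n h
  exact ⟨x, y, 2 * z, by linarith⟩

/-- Uses `5 (x² + z² + 5 y²) = (x + 2 z)² + (2 x - z)² + (5 y)²`; if `5 ∣ A² + B² + C²`, then one of the
three numbers is divisible by `5` and the other two have ratio `± 2` modulo `5` or are divisible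
by `5` too. -/
theorem rep_one_one_five (n : ℕ) (h : ThreeSq (5 * n)) :
    ∃ x y z : ℤ, (n : ℤ) = x ^ 2 + 5 * y ^ 2 + z ^ 2 := by
  obtain ⟨A, B, C, h⟩ := h
  push_cast at h
  have main : ∀ A B C : ℤ, 5 * (n : ℤ) = A ^ 2 + B ^ 2 + C ^ 2 → C % 5 = 0 →
      (A + 2 * B) % 5 = 0 ∨ (A - 2 * B) % 5 = 0 →
      ∃ x y z : ℤ, (n : ℤ) = x ^ 2 + 5 * y ^ 2 + z ^ 2 := by
    have main' : ∀ A B C : ℤ, 5 * (n : ℤ) = A ^ 2 + B ^ 2 + C ^ 2 → C % 5 = 0 →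
        (A + 2 * B) % 5 = 0 → ∃ x y z : ℤ, (n : ℤ) = x ^ 2 + 5 * y ^ 2 + z ^ 2 := by
      intro A B C h hC hAB
      obtain ⟨y, rfl⟩ : ∃ y, C = 5 * y := ⟨C / 5, by omega⟩
      obtain ⟨x, hx⟩ : ∃ x, A + 2 * B = 5 * x := ⟨(A + 2 * B) / 5, by omega⟩
      obtain rfl : A = 5 * x - 2 * B := by linarith
      exact ⟨x, y, 2 * x - B, by linarith⟩
    intro A B C h hC hAB
    rcases hAB with hAB | hAB
    · exact main' A B C h hC hAB
    · exact main' A (-B) C (by linarith) hC (by omega)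
  have sq5 : ∀ X : ℤ, X % 5 = 0 ∧ X ^ 2 % 5 = 0 ∨ (X % 5 = 1 ∨ X % 5 = 4) ∧ X ^ 2 % 5 = 1 ∨
      (X % 5 = 2 ∨ X % 5 = 3) ∧ X ^ 2 % 5 = 4 := by
    intro X
    have : X % 5 = 0 ∨ X % 5 = 1 ∨ X % 5 = 2 ∨ X % 5 = 3 ∨ X % 5 = 4 := by omega
    rcases this with h | h | h | h | h <;> simp [pow_two, Int.mul_emod, h]
  have hA := sq5 A
  have hB := sq5 B
  have hC := sq5 C
  have key : (C % 5 = 0 ∧ ((A + 2 * B) % 5 = 0 ∨ (A - 2 * B) % 5 = 0)) ∨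
      (A % 5 = 0 ∧ ((B + 2 * C) % 5 = 0 ∨ (B - 2 * C) % 5 = 0)) ∨
      (B % 5 = 0 ∧ ((A + 2 * C) % 5 = 0 ∨ (A - 2 * C) % 5 = 0)) := by
    have h0 : (A ^ 2 + B ^ 2 + C ^ 2) % 5 = 0 := by omega
    clear h main sq5
    generalize A ^ 2 = a at *
    generalize B ^ 2 = b at *
    generalize C ^ 2 = c at *
    rcases hA with hA | hA | hA <;> rcases hB with hB | hB | hB <;>
      rcases hC with hC | hC | hC <;> omega
  rcases key with ⟨k1, k2⟩ | ⟨k1, k2⟩ | ⟨k1, k2⟩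
  · exact main A B C h k1 k2
  · exact main B C A (by linarith) k1 k2
  · exact main A C B (by linarith) k1 k2

/-- Here the signs in `2 n = A² + B² + C²` are chosen so that `3 ∣ A + B + C`, which is possible unless
`2 n ≡ 1 (mod 3)`. With `A + B + C = 6 y` one gets `3 n = 18 y² + L(A - B, B - C)`, and the last term
is three times a value of `L(z, w) = z² + z w + w²`. -/
theorem rep_six_L (n : ℕ) (h : ThreeSq (2 * n)) (h3 : n % 3 ≠ 2) :
    ∃ y z w : ℤ, (n : ℤ) = 6 * y ^ 2 + (z ^ 2 + z * w + w ^ 2) := by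
  obtain ⟨A, B, C, h⟩ := h
  push_cast at h
  obtain ⟨A', B', C', h1, hd⟩ : ∃ A' B' C' : ℤ,
      A' ^ 2 + B' ^ 2 + C' ^ 2 = A ^ 2 + B ^ 2 + C ^ 2 ∧ 3 ∣ A' + B' + C' := by
    obtain ⟨A', hA, hA'⟩ := exists_sign_mod_three A
    obtain ⟨B', hB, hB'⟩ := exists_sign_mod_three B
    obtain ⟨C', hC, hC'⟩ := exists_sign_mod_three C
    have key : 3 ∣ A' + B' + C' ∨ 3 ∣ A' + B' + -C' ∨ 3 ∣ A' + -B' + C' := by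
      generalize A ^ 2 = a at *
      generalize B ^ 2 = b at *
      generalize C ^ 2 = c at *
      omega
    rcases key with k | k | k
    · exact ⟨_, _, _, by rw [hA, hB, hC], k⟩
    · exact ⟨_, _, _, by rw [neg_sq, hA, hB, hC], k⟩
    · exact ⟨_, _, _, by rw [neg_sq, hA, hB, hC], k⟩
  rw [← h1] at h
  have pA := sq_parity A'
  have pB := sq_parity B'
  have pC := sq_parity C'
  obtain ⟨y, hy⟩ : ∃ y, A' + B' + C' = 6 * y := ⟨(A' + B' + C') / 6, by omega⟩
  -- `A' - B' = v + 3 k` with `v = B' - C'` and `k = 2 y - B'`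
  refine ⟨y, (B' - C') + (2 * y - B'), 2 * y - B', ?_⟩
  obtain rfl : A' = 6 * y - B' - C' := by linarith
  linarith

/-! ### Sums of two Eisenstein norms -/

/-- `z² + z w + w²` takes the same values as `u² + 3 v²`, since one of `z`, `w`, `z + w` is even. -/
theorem L_diag (z w : ℤ) : ∃ u v : ℤ, z ^ 2 + z * w + w ^ 2 = u ^ 2 + 3 * v ^ 2 := by
  rcases (by omega : z % 2 = 0 ∨ w % 2 = 0 ∨ (z + w) % 2 = 0) with h | h | h
  · obtain ⟨v, rfl⟩ : ∃ v, z = 2 * v := ⟨z / 2, by omega⟩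
    exact ⟨w + v, v, by ring⟩
  · obtain ⟨v, rfl⟩ : ∃ v, w = 2 * v := ⟨w / 2, by omega⟩
    exact ⟨z + v, v, by ring⟩
  · obtain ⟨t, ht⟩ : ∃ t, z + w = 2 * t := ⟨(z + w) / 2, by omega⟩
    obtain rfl : z = 2 * t - w := by linarith
    exact ⟨t - w, t, by ring⟩

/-- Division with remainder in the Eisenstein integers, whose norm is `x² + x y + y²`: the norm of the
remainder is at most `7 / 16` of the norm of `m`. -/
theorem eisenstein_reduce (m : ℤ) (hm : 0 < m) (x y : ℤ) : ∃ u v r s : ℤ, x = r + m * u ∧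
    y = s + m * v ∧ 16 * (r ^ 2 + r * s + s ^ 2) ≤ 7 * m ^ 2 := by
  obtain ⟨k, hk⟩ := exists_centered m hm y
  obtain ⟨l, hl⟩ := exists_centered (2 * m) (by omega) (2 * x + (y + k * m))
  refine ⟨-l, -k, x + l * m, y + k * m, by ring, by ring, ?_⟩
  nlinarith

/-- `n` is a sum of two norms `x² + x y + y²` of Eisenstein integers. -/
def TwoL (n : ℤ) : Prop := ∃ x y z w : ℤ, n = (x ^ 2 + x * y + y ^ 2) + (z ^ 2 + z * w + w ^ 2)

/-- With Eisenstein integers `α, β, ρ, σ`, this is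
`(|α|² + |β|²) (|ρ|² + |σ|²) = |α ρ̄ + β σ̄|² + |α σ - β ρ|²`. -/
theorem TwoL.mul {m n : ℤ} (hm : TwoL m) (hn : TwoL n) : TwoL (m * n) := by
  obtain ⟨x1, y1, x2, y2, rfl⟩ := hm
  obtain ⟨r1, s1, r2, s2, rfl⟩ := hn
  exact ⟨x1 * (r1 + s1) + y1 * s1 + (x2 * (r2 + s2) + y2 * s2),
    -x1 * s1 + y1 * r1 + (-x2 * s2 + y2 * r2),
    x1 * r2 - y1 * s2 - x2 * r1 + y2 * s1,
    x1 * s2 + y1 * r2 + y1 * s2 - x2 * s1 - y2 * r1 - y2 * s1, by ring⟩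

theorem L_nonneg (x y : ℤ) : 0 ≤ x ^ 2 + x * y + y ^ 2 := by
  nlinarith [sq_nonneg (x + y), sq_nonneg x, sq_nonneg y]

theorem L_eq_zero {x y : ℤ} (h : x ^ 2 + x * y + y ^ 2 = 0) : x = 0 ∧ y = 0 := by
  constructor <;> apply pow_eq_zero_iff (two_ne_zero) |>.1 <;>
    nlinarith [sq_nonneg (x + y), sq_nonneg x, sq_nonneg y]

/-- Lagrange's descent from a multiple `m p` with `m < p` down to `p`. -/
theorem twoL_descent (p : ℕ) (hp : p.Prime) : ∀ m : ℕ, 0 < m → m < p → TwoL (m * p) →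
    TwoL p := by
  intro m
  induction m using Nat.strong_induction_on with
  | _ m ih =>
  intro hm hmp ⟨x1, y1, x2, y2, h⟩
  rcases eq_or_ne m 1 with rfl | hm1
  · exact ⟨x1, y1, x2, y2, by rw [← h]; simp⟩
  have hm' : (0 : ℤ) < m := by exact_mod_cast hm
  obtain ⟨u1, v1, r1, s1, hx1, hy1, b1⟩ := eisenstein_reduce m hm' x1 y1
  obtain ⟨u2, v2, r2, s2, hx2, hy2, b2⟩ := eisenstein_reduce m hm' x2 y2
  obtain ⟨t, ht⟩ : (m : ℤ) ∣ (r1 ^ 2 + r1 * s1 + s1 ^ 2) + (r2 ^ 2 + r2 * s2 + s2 ^ 2) := by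
    refine ⟨p - (u1 * (2 * r1 + s1) + v1 * (2 * s1 + r1) + m * (u1 ^ 2 + u1 * v1 + v1 ^ 2)
      + (u2 * (2 * r2 + s2) + v2 * (2 * s2 + r2) + m * (u2 ^ 2 + u2 * v2 + v2 ^ 2))), ?_⟩
    subst hx1 hy1 hx2 hy2
    linarith
  have n1 := L_nonneg r1 s1
  have n2 := L_nonneg r2 s2
  have ht0 : 0 ≤ t := nonneg_of_mul_nonneg_right (by rw [← ht]; exact add_nonneg n1 n2) hm'
  have htm : t < m := by
    have : (m : ℤ) * t < m * m := by nlinarith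
    exact lt_of_mul_lt_mul_left this hm'.le
  rcases ht0.eq_or_lt with h0 | hpos
  · -- a zero remainder would force `m ∣ p`
    exfalso
    rw [← h0, mul_zero] at ht
    obtain ⟨rfl, rfl⟩ := L_eq_zero (x := r1) (y := s1) (by linarith)
    obtain ⟨rfl, rfl⟩ := L_eq_zero (x := r2) (y := s2) (by linarith)
    have hdvd : (m : ℤ) ∣ p := by
      refine ⟨(u1 ^ 2 + u1 * v1 + v1 ^ 2) + (u2 ^ 2 + u2 * v2 + v2 ^ 2), ?_⟩
      apply mul_left_cancel₀ hm'.ne'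
      rw [h, hx1, hy1, hx2, hy2]; ring
    have := (Nat.dvd_prime hp).1 (Int.natCast_dvd_natCast.1 hdvd)
    omega
  · lift t to ℕ using ht0
    refine ih t (by omega) (by omega) (by omega) ?_
    -- the two components of the Eisenstein product formula, divided by `m`
    refine ⟨t + (u1 * (r1 + s1) + v1 * s1) + (u2 * (r2 + s2) + v2 * s2),
      (-u1 * s1 + v1 * r1) + (-u2 * s2 + v2 * r2),
      u1 * r2 - v1 * s2 - u2 * r1 + v2 * s1,
      u1 * s2 + v1 * r2 + v1 * s2 - u2 * s1 - v2 * r1 - v2 * s1, ?_⟩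
    have hm2 : (m : ℤ) ^ 2 ≠ 0 := pow_ne_zero _ hm'.ne'
    apply mul_left_cancel₀ hm2
    have e1 : (m : ℤ) * (t + (u1 * (r1 + s1) + v1 * s1) + (u2 * (r2 + s2) + v2 * s2)) =
        x1 * (r1 + s1) + y1 * s1 + (x2 * (r2 + s2) + y2 * s2) := by
      rw [hx1, hy1, hx2, hy2]; linear_combination -ht
    have e2 : (m : ℤ) * ((-u1 * s1 + v1 * r1) + (-u2 * s2 + v2 * r2)) =
        -x1 * s1 + y1 * r1 + (-x2 * s2 + y2 * r2) := by
      rw [hx1, hy1, hx2, hy2]; ring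
    have e3 : (m : ℤ) * (u1 * r2 - v1 * s2 - u2 * r1 + v2 * s1) =
        x1 * r2 - y1 * s2 - x2 * r1 + y2 * s1 := by
      rw [hx1, hy1, hx2, hy2]; ring
    have e4 : (m : ℤ) * (u1 * s2 + v1 * r2 + v1 * s2 - u2 * s1 - v2 * r1 - v2 * s1) =
        x1 * s2 + y1 * r2 + y1 * s2 - x2 * s1 - y2 * r1 - y2 * s1 := by
      rw [hx1, hy1, hx2, hy2]; ring
    generalize (t : ℤ) + (u1 * (r1 + s1) + v1 * s1) + (u2 * (r2 + s2) + v2 * s2) = g1 at *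
    generalize (-u1 * s1 + v1 * r1) + (-u2 * s2 + v2 * r2) = g2 at *
    generalize u1 * r2 - v1 * s2 - u2 * r1 + v2 * s1 = g3 at *
    generalize u1 * s2 + v1 * r2 + v1 * s2 - u2 * s1 - v2 * r1 - v2 * s1 = g4 at *
    calc (m : ℤ) ^ 2 * (t * p) = (m * p) * (m * t) := by ring
      _ = (m * g1) ^ 2 + (m * g1) * (m * g2) + (m * g2) ^ 2 +
          ((m * g3) ^ 2 + (m * g3) * (m * g4) + (m * g4) ^ 2) := by
        rw [e1, e2, e3, e4, h, ← ht]; ring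
      _ = _ := by ring

theorem twoL_prime (p : ℕ) (hp : p.Prime) : TwoL p := by
  rcases hp.eq_two_or_odd with rfl | hodd
  · exact ⟨1, 0, 1, 0, by norm_num⟩
  have := Fact.mk hp
  have hp3 : 3 ≤ p := by have := hp.two_le; omega
  have hp' : (0 : ℤ) < p := by omega
  obtain ⟨a, b, hab⟩ := ZMod.sq_add_sq p (-3)
  obtain ⟨a, rfl⟩ := ZMod.intCast_surjective a
  obtain ⟨b, rfl⟩ := ZMod.intCast_surjective b
  obtain ⟨k, hk⟩ := exists_centered p hp' a
  obtain ⟨l, hl⟩ := exists_centered p hp' b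
  obtain ⟨t, ht⟩ : (p : ℤ) ∣ (a + k * p) ^ 2 + (b + l * p) ^ 2 + 3 := by
    rw [← ZMod.intCast_zmod_eq_zero_iff_dvd]
    push_cast
    simp [hab]
  have ht0 : 0 < t := pos_of_mul_pos_right (by rw [← ht]; positivity) hp'.le
  have htp : t < p := by
    have : (p : ℤ) * t < p * p := by
      have : (3 : ℤ) ≤ p := by exact_mod_cast hp3
      nlinarith
    exact lt_of_mul_lt_mul_left this hp'.le
  lift t to ℕ using ht0.le
  refine twoL_descent p hp t (by omega) (by omega) ⟨a + k * p, 0, b + l * p - 1, 2, ?_⟩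
  linear_combination -ht

theorem twoL_nat (n : ℕ) : TwoL n := by
  induction n using Nat.recOnMul with
  | zero => exact ⟨0, 0, 0, 0, by norm_num⟩
  | one => exact ⟨1, 0, 0, 0, by norm_num⟩
  | prime p hp => exact twoL_prime p hp
  | mul a b ha hb => push_cast; exact ha.mul hb

/-! ### The universal quaternary forms -/

/-- `n` is a value of the form `a x² + b y² + c (z² + z w + w²)` over the integers. -/
def Represents (a b c n : ℕ) : Prop :=
  ∃ x y z w : ℤ, (n : ℤ) = a * x ^ 2 + b * y ^ 2 + c * (z ^ 2 + z * w + w ^ 2)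

/-- Doubling all variables multiplies the value by `4`. -/
theorem rep_of_not_four_dvd (a b c : ℕ) (h : ∀ n, n % 4 ≠ 0 → Represents a b c n) : ∀ n, Represents a b c n := by
  intro n
  induction n using Nat.strong_induction_on with
  | _ n ih =>
  by_cases h4 : n % 4 = 0
  · rcases Nat.eq_zero_or_pos n with rfl | hpos
    · exact ⟨0, 0, 0, 0, by norm_num⟩
    · obtain ⟨m, rfl⟩ : ∃ m, n = 4 * m := ⟨n / 4, by omega⟩
      obtain ⟨x, y, z, w, hm⟩ := ih m (by omega)
      exact ⟨2 * x, 2 * y, 2 * z, 2 * w, by push_cast; linear_combination 4 * hm⟩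
  · exact h n h4

theorem rep_add {a b c n : ℕ} (m k : ℕ)
    (h : ∃ x z w : ℤ, (m : ℤ) = a * x ^ 2 + c * (z ^ 2 + z * w + w ^ 2)) (hn : n = m + b * k ^ 2) :
    Represents a b c n := by
  obtain ⟨x, z, w, h⟩ := h
  exact ⟨x, k, z, w, by rw [hn]; push_cast; linear_combination h⟩

/-- Uses that `z² + z w + w²` takes every value `u² + 3 k²`. -/
theorem rep_add_diag {a b c n : ℕ} (m k : ℕ)
    (h : ∃ x y z : ℤ, (m : ℤ) = a * x ^ 2 + b * y ^ 2 + c * z ^ 2) (hn : n = m + 3 * c * k ^ 2) :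
    Represents a b c n := by
  obtain ⟨x, y, z, h⟩ := h
  exact ⟨x, y, z - k, 2 * k, by rw [hn]; push_cast; linear_combination h⟩

theorem two_L (n : ℕ) (h : n % 2 = 1 ∨ n % 16 = 2 ∨ n % 16 = 6 ∨ n % 16 = 14 ∨ n % 16 = 4) :
    ∃ x z w : ℤ, (n : ℤ) = (2 : ℕ) * x ^ 2 + (1 : ℕ) * (z ^ 2 + z * w + w ^ 2) := by
  have : ThreeSq (6 * n) := by
    rcases (by omega : n % 2 = 1 ∨ n % 2 = 0) with h | h
    · exact threeSq_of_mod _ (by omega)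
    · exact threeSq_four_mul_of_mod _ (by omega)
  simpa using rep_two_L n this

theorem one_two_L (n : ℕ) (h : n % 8 = 1 ∨ n % 8 = 2 ∨ n % 8 = 3 ∨ n % 8 = 6 ∨ n % 8 = 7) :
    ∃ x z w : ℤ, (n : ℤ) = (1 : ℕ) * x ^ 2 + (2 : ℕ) * (z ^ 2 + z * w + w ^ 2) := by
  simpa using rep_one_A2 n (threeSq_of_mod _ (by omega))

theorem univ_2_b_1 (b : ℕ) (hb : 2 ≤ b) (hb' : b ≤ 10) (n : ℕ) : Represents 2 b 1 n := by
  revert n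
  apply rep_of_not_four_dvd
  intro n hn
  by_cases h10 : n % 16 = 10
  · by_cases hodd : b % 2 = 1
    · exact rep_add (n - b) 1 (two_L _ (by omega)) (by omega)
    · have : b = 2 ∨ b = 4 ∨ b = 6 ∨ b = 8 ∨ b = 10 := by omega
      rcases this with rfl | rfl | rfl | rfl | rfl
      · exact rep_add (n - 8) 2 (two_L _ (by omega)) (by omega)
      · exact rep_add (n - 4) 1 (two_L _ (by omega)) (by omega)
      · exact rep_add (n - 6) 1 (two_L _ (by omega)) (by omega)
      · exact rep_add (n - 8) 1 (two_L _ (by omega)) (by omega)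
      · rcases (by omega : n = 10 ∨ n = 26 ∨ 40 ≤ n) with rfl | rfl | h
        · exact ⟨0, 1, 0, 0, by norm_num⟩
        · exact ⟨0, 1, 4, 0, by norm_num⟩
        · exact rep_add (n - 40) 2 (two_L _ (by omega)) (by omega)
  · exact rep_add n 0 (two_L _ (by omega)) (by omega)

theorem univ_1_b_2 (b : ℕ) (hb : 1 ≤ b) (hb' : b ≤ 5) (n : ℕ) : Represents 1 b 2 n := by
  revert n
  apply rep_of_not_four_dvd
  intro n hn
  by_cases h5 : n % 8 = 5
  · have : b = 1 ∨ b = 2 ∨ b = 3 ∨ b = 4 ∨ b = 5 := by omega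
    rcases this with rfl | rfl | rfl | rfl | rfl
    · exact rep_add (n - 4) 2 (one_two_L _ (by omega)) (by omega)
    · exact rep_add (n - 2) 1 (one_two_L _ (by omega)) (by omega)
    · exact rep_add (n - 3) 1 (one_two_L _ (by omega)) (by omega)
    · exact rep_add (n - 4) 1 (one_two_L _ (by omega)) (by omega)
    · rcases (by omega : n = 5 ∨ n = 13 ∨ 20 ≤ n) with rfl | rfl | h
      · exact ⟨0, 1, 0, 0, by norm_num⟩
      · exact ⟨0, 1, 2, 0, by norm_num⟩
      · exact rep_add (n - 20) 2 (one_two_L _ (by omega)) (by omega)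
  · exact rep_add n 0 (one_two_L _ (by omega)) (by omega)

theorem threeSq_two_mul (n : ℕ) (h4 : n % 4 ≠ 0) (h : n % 16 ≠ 14) : ThreeSq (2 * n) := by
  rcases (by omega : n % 2 = 1 ∨ n % 2 = 0) with h | h
  · exact threeSq_of_mod _ (by omega)
  · exact threeSq_four_mul_of_mod _ (by omega)

theorem univ_1_2_4 (n : ℕ) : Represents 1 2 4 n := by
  revert n
  apply rep_of_not_four_dvd
  intro n hn
  by_cases h : n % 16 = 14
  · exact rep_add_diag (n - 12) 1
      (by simpa using rep_one_two_four_s1 (n - 12) (threeSq_two_mul _ (by omega) (by omega))) (by omega)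
  · exact rep_add_diag n 0
      (by simpa using rep_one_two_four_s1 n (threeSq_two_mul _ (by omega) (by omega))) (by omega)

theorem univ_1_2_3 (n : ℕ) : Represents 1 2 3 n := by
  revert n
  apply rep_of_not_four_dvd
  intro n hn
  by_cases h : n % 16 = 10
  · exact rep_add_diag (n - 9) 1
      (by simpa using rep_one_two_three_s1 (n - 9) (threeSq_of_mod _ (by omega))) (by omega)
  · have h6 : ThreeSq (6 * n) := by
      rcases (by omega : n % 2 = 1 ∨ n % 2 = 0) with h | h
      · exact threeSq_of_mod _ (by omega)
      · exact threeSq_four_mul_of_mod _ (by omega)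
    exact rep_add_diag n 0 (by simpa using rep_one_two_three_s1 n h6) (by omega)

theorem univ_1_1_1 (n : ℕ) : Represents 1 1 1 n := by
  revert n
  apply rep_of_not_four_dvd
  intro n hn
  have key : ∀ m, ThreeSq m →
      ∃ x y z : ℤ, (m : ℤ) = (1 : ℕ) * x ^ 2 + (1 : ℕ) * y ^ 2 + (1 : ℕ) * z ^ 2 := by
    intro m hm; simpa [ThreeSq] using hm
  by_cases h : n % 8 = 7
  · rcases (by omega : n = 7 ∨ 12 ≤ n) with rfl | h
    · exact ⟨0, 0, 2, 1, by norm_num⟩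
    · exact rep_add_diag (n - 12) 2 (key _ (threeSq_of_mod _ (by omega))) (by omega)
  · exact rep_add_diag n 0 (key _ (threeSq_of_mod _ (by omega))) (by omega)

theorem univ_1_2_1 (n : ℕ) : Represents 1 2 1 n := by
  revert n
  apply rep_of_not_four_dvd
  intro n hn
  by_cases h : n % 16 = 14
  · exact rep_add_diag (n - 3) 1
      (by simpa using rep_one_one_two (n - 3) (threeSq_two_mul _ (by omega) (by omega))) (by omega)
  · exact rep_add_diag n 0
      (by simpa using rep_one_one_two n (threeSq_two_mul _ (by omega) (by omega))) (by omega)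

theorem univ_1_3_1 (n : ℕ) : Represents 1 3 1 n := by
  obtain ⟨x, y, z, w, h⟩ := twoL_nat n
  obtain ⟨u, v, huv⟩ := L_diag x y
  exact ⟨u, v, z, w, by push_cast; linear_combination h + huv⟩

theorem univ_1_4_1 (n : ℕ) : Represents 1 4 1 n := by
  revert n
  apply rep_of_not_four_dvd
  intro n hn
  by_cases h : n % 4 = 3
  · have key : ∀ j, ThreeSq j → ∃ x y z : ℤ,
        ((4 * j : ℕ) : ℤ) = (1 : ℕ) * x ^ 2 + (4 : ℕ) * y ^ 2 + (1 : ℕ) * z ^ 2 := by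
      rintro j ⟨x, y, z, h⟩
      exact ⟨2 * x, y, 2 * z, by push_cast; linear_combination 4 * h⟩
    obtain ⟨j, rfl⟩ : ∃ j, n = 4 * j + 3 := ⟨n / 4, by omega⟩
    by_cases hj : j % 8 = 7 ∨ j % 4 = 0 ∧ 6 ≤ j
    · exact rep_add_diag (4 * (j - 6)) 3 (key _ (threeSq_of_mod _ (by omega))) (by omega)
    · refine rep_add_diag (4 * j) 1 (key _ ?_) (by omega)
      rcases (by omega : j = 0 ∨ j = 4 ∨ j % 4 ≠ 0) with rfl | rfl | h
      · exact ⟨0, 0, 0, by norm_num⟩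
      · exact ⟨2, 0, 0, by norm_num⟩
      · exact threeSq_of_mod _ (by omega)
  · obtain ⟨A, B, C, h⟩ := threeSq_of_mod n (by omega)
    have main : ∀ A B C : ℤ, (n : ℤ) = A ^ 2 + B ^ 2 + C ^ 2 → B % 2 = 0 → Represents 1 4 1 n := by
      intro A B C h hB
      obtain ⟨y, rfl⟩ : ∃ y, B = 2 * y := ⟨B / 2, by omega⟩
      exact ⟨A, y, C, 0, by push_cast; linear_combination h⟩
    have sq4 : ∀ X : ℤ, X % 2 = 0 ∨ X ^ 2 % 4 = 1 := by
      intro X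
      rcases (by omega : X % 2 = 0 ∨ X % 4 = 1 ∨ X % 4 = 3) with h | h | h
      · exact Or.inl h
      · right; simp [pow_two, Int.mul_emod, h]
      · right; simp [pow_two, Int.mul_emod, h]
    rcases sq4 A with hA | hA
    · exact main B A C (by linarith) hA
    rcases sq4 B with hB | hB
    · exact main A B C h hB
    rcases sq4 C with hC | hC
    · exact main A C B (by linarith) hC
    omega

theorem univ_1_5_1 (n : ℕ) : Represents 1 5 1 n := by
  revert n
  apply rep_of_not_four_dvd
  intro n hn
  by_cases h : n % 8 = 3
  · rcases (by omega : n = 3 ∨ n = 11 ∨ 12 ≤ n) with rfl | rfl | h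
    · exact ⟨0, 0, 1, 1, by norm_num⟩
    · exact ⟨2, 0, 2, 1, by norm_num⟩
    · exact rep_add_diag (n - 12) 2
        (by simpa using rep_one_one_five (n - 12) (threeSq_of_mod _ (by omega))) (by omega)
  · exact rep_add_diag n 0
      (by simpa using rep_one_one_five n (threeSq_of_mod _ (by omega))) (by omega)

theorem univ_1_6_1 (n : ℕ) : Represents 1 6 1 n := by
  revert n
  apply rep_of_not_four_dvd
  intro n hn
  have key : ∀ m k : ℕ, m % 4 ≠ 0 → m % 16 ≠ 14 → m % 3 ≠ 2 → n = m + k ^ 2 → Represents 1 6 1 n := by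
    intro m k h1 h2 h3 h
    obtain ⟨y, z, w, hm⟩ := rep_six_L m (threeSq_two_mul m h1 h2) h3
    exact ⟨k, y, z, w, by rw [h]; push_cast; linear_combination hm⟩
  by_cases h3 : n % 3 = 2
  · by_cases h2 : n % 2 = 0
    · exact key (n - 1) 1 (by omega) (by omega) (by omega) (by omega)
    · exact key (n - 4) 2 (by omega) (by omega) (by omega) (by omega)
  · by_cases h : n % 16 = 14
    · exact key (n - 9) 3 (by omega) (by omega) (by omega) (by omega)
    · exact key n 0 (by omega) (by omega) (by omega) (by omega)

/-! ### The candidates and the conclusion -/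

/-- A representation of `n ≤ 10` uses only squares and values of `z² + z w + w²` up to `10`. -/
theorem Represents.small {a b c n : ℕ} (h : Represents a b c n) (ha : 0 < a) (hb : 0 < b) (hc : 0 < c)
    (hn : n ≤ 10) : ∃ x y l : ℕ, (x = 0 ∨ x = 1 ∨ x = 4 ∨ x = 9) ∧ (y = 0 ∨ y = 1 ∨ y = 4 ∨ y = 9) ∧
      (l = 0 ∨ l = 1 ∨ l = 3 ∨ l = 4 ∨ l = 7 ∨ l = 9) ∧ n = a * x + b * y + c * l := by
  obtain ⟨x, y, z, w, h⟩ := h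
  have hL := L_nonneg z w
  have sq : ∀ X : ℤ, X ^ 2 ≤ 10 → ∃ t : ℕ, X ^ 2 = t ∧ (t = 0 ∨ t = 1 ∨ t = 4 ∨ t = 9) := by
    intro X hX
    have h1 : X ≤ 3 := by nlinarith
    have h2 : -3 ≤ X := by nlinarith
    refine ⟨(X ^ 2).toNat, (Int.toNat_of_nonneg (sq_nonneg X)).symm, ?_⟩
    interval_cases X <;> simp
  have ha' : (1 : ℤ) ≤ a := by exact_mod_cast ha
  have hb' : (1 : ℤ) ≤ b := by exact_mod_cast hb
  have hc' : (1 : ℤ) ≤ c := by exact_mod_cast hc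
  have hn' : (n : ℤ) ≤ 10 := by exact_mod_cast hn
  have p1 : x ^ 2 ≤ a * x ^ 2 := le_mul_of_one_le_left (sq_nonneg x) ha'
  have p2 : y ^ 2 ≤ b * y ^ 2 := le_mul_of_one_le_left (sq_nonneg y) hb'
  have p3 : z ^ 2 + z * w + w ^ 2 ≤ c * (z ^ 2 + z * w + w ^ 2) := le_mul_of_one_le_left hL hc'
  have q1 := sq_nonneg x
  have q2 := sq_nonneg y
  obtain ⟨x', hx, hx'⟩ := sq x (by linarith)
  obtain ⟨y', hy, hy'⟩ := sq y (by linarith)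
  have hl10 : z ^ 2 + z * w + w ^ 2 ≤ 10 := by linarith
  obtain ⟨l, hl, hl'⟩ : ∃ l : ℕ, z ^ 2 + z * w + w ^ 2 = l ∧
      (l = 0 ∨ l = 1 ∨ l = 3 ∨ l = 4 ∨ l = 7 ∨ l = 9) := by
    refine ⟨(z ^ 2 + z * w + w ^ 2).toNat, (Int.toNat_of_nonneg hL).symm, ?_⟩
    have h1 : z ≤ 3 := by nlinarith [sq_nonneg (z + 2 * w)]
    have h2 : -3 ≤ z := by nlinarith [sq_nonneg (z + 2 * w)]
    have h3 : w ≤ 3 := by nlinarith [sq_nonneg (w + 2 * z)]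
    have h4 : -3 ≤ w := by nlinarith [sq_nonneg (w + 2 * z)]
    clear h p1 p2 p3
    interval_cases z <;> interval_cases w <;> simp at hl10 ⊢
  rw [hx, hy, hl] at h
  exact ⟨x', y', l, hx', hy', hl', by exact_mod_cast h⟩

set_option maxHeartbeats 1600000 in
/-- The numbers `1, 2, 3, 5, 6, 10` leave only 22 forms. -/
theorem candidates (a b c : ℕ) (ha : 0 < a) (hb : 0 < b) (hc : 0 < c) (hab : a ≤ b)
    (h1 : Represents a b c 1) (h2 : Represents a b c 2) (h3 : Represents a b c 3) (h5 : Represents a b c 5)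
    (h6 : Represents a b c 6) (h10 : Represents a b c 10) :
    (a = 2 ∧ c = 1 ∧ 2 ≤ b ∧ b ≤ 10) ∨ (a = 1 ∧ c = 2 ∧ 1 ≤ b ∧ b ≤ 5) ∨
    (a = 1 ∧ c = 1 ∧ b ≤ 6) ∨ (a = 1 ∧ b = 2 ∧ (c = 3 ∨ c = 4)) := by
  have s1 := h1.small ha hb hc (by norm_num)
  have s2 := h2.small ha hb hc (by norm_num)
  have s3 := h3.small ha hb hc (by norm_num)
  have s5 := h5.small ha hb hc (by norm_num)
  have s6 := h6.small ha hb hc (by norm_num)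
  have s10 := h10.small ha hb hc (by norm_num)
  clear h1 h2 h3 h5 h6 h10
  have ac : a = 1 ∨ c = 1 := by
    obtain ⟨x, y, l, hx, hy, hl, h⟩ := s1
    rcases hx with rfl | rfl | rfl | rfl <;> rcases hy with rfl | rfl | rfl | rfl <;>
      rcases hl with rfl | rfl | rfl | rfl | rfl | rfl <;> omega
  have t2 : (a = 2 ∧ c = 1) ∨ (a = 1 ∧ c = 1) ∨ (a = 1 ∧ c = 2) ∨ (a = 1 ∧ b ≤ 2) := by
    obtain ⟨x, y, l, hx, hy, hl, h⟩ := s2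
    rcases hx with rfl | rfl | rfl | rfl <;> rcases hy with rfl | rfl | rfl | rfl <;>
      rcases hl with rfl | rfl | rfl | rfl | rfl | rfl <;> omega
  rcases t2 with ⟨rfl, rfl⟩ | ⟨rfl, rfl⟩ | ⟨rfl, rfl⟩ | ⟨rfl, hb2⟩
  · obtain ⟨x, y, l, hx, hy, hl, h⟩ := s10
    rcases hx with rfl | rfl | rfl | rfl <;> rcases hy with rfl | rfl | rfl | rfl <;> omega
  · obtain ⟨x, y, l, hx, hy, hl, h⟩ := s6
    rcases hx with rfl | rfl | rfl | rfl <;> rcases hy with rfl | rfl | rfl | rfl <;> omega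
  · obtain ⟨x, y, l, hx, hy, hl, h⟩ := s5
    rcases hx with rfl | rfl | rfl | rfl <;> rcases hy with rfl | rfl | rfl | rfl <;> omega
  · rcases (by omega : b = 1 ∨ b = 2) with rfl | rfl
    · obtain ⟨x, y, l, hx, hy, hl, h⟩ := s3
      obtain ⟨x', y', l', hx', hy', hl', h'⟩ := s6
      have hc3 : c ≤ 3 := by
        rcases hl with rfl | rfl | rfl | rfl | rfl | rfl <;> omega
      interval_cases c <;> omega
    · obtain ⟨x, y, l, hx, hy, hl, h⟩ := s5
      obtain ⟨x', y', l', hx', hy', hl', h'⟩ := s10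
      have hc5 : c ≤ 5 := by
        rcases hl with rfl | rfl | rfl | rfl | rfl | rfl <;> omega
      interval_cases c <;> omega

theorem stmt_1 (a b c : ℕ) (ha : 0 < a) (hb : 0 < b) (hc : 0 < c) (hab : a ≤ b)
    (h : ∀ n ∈ ({1, 2, 3, 5, 6, 10} : Set ℕ), ∃ x y z w : ℤ,
      (n : ℤ) = a * x ^ 2 + b * y ^ 2 + c * (z ^ 2 + z * w + w ^ 2)) :
    ∀ n : ℕ, ∃ x y z w : ℤ,
      (n : ℤ) = a * x ^ 2 + b * y ^ 2 + c * (z ^ 2 + z * w + w ^ 2) := by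
  intro n
  change Represents a b c n
  rcases candidates a b c ha hb hc hab (h 1 (by simp)) (h 2 (by simp)) (h 3 (by simp))
    (h 5 (by simp)) (h 6 (by simp)) (h 10 (by simp)) with
    ⟨rfl, rfl, h1, h2⟩ | ⟨rfl, rfl, h1, h2⟩ | ⟨rfl, rfl, h1⟩ | ⟨rfl, rfl, rfl | rfl⟩
  · exact univ_2_b_1 b h1 h2 n
  · exact univ_1_b_2 b h1 h2 n
  · interval_cases b
    · exact univ_1_1_1 n
    · exact univ_1_2_1 n
    · exact univ_1_3_1 n
    · exact univ_1_4_1 n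
    · exact univ_1_5_1 n
    · exact univ_1_6_1 n
  · exact univ_1_2_3 n
  · exact univ_1_2_4 n
end

section
/- A nonnegative integer n can be written as x² + (y² + y·z + z²) with x, y, z ∈ ℤ if and only if n is not of the form 9^k·(9·l + 6) for nonnegative integers k and l. -/
/-!
Write `f = x² + (y² + yz + z²)`.

*Exceptional numbers are not represented.* Modulo 9 the form never takes the value 6, and
`9 ∣ f(x, y, z)` forces `3 ∣ x, y, z`, so a factor 9 can be divided out.

*All other numbers are represented.* The form `f` has half-discriminant 3 (called discriminant below),
and every positive definite integral ternary form of discriminant 3 is equivalent to `f`: Hermite reduction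
brings the leading coefficient down to 1, leaving finitely many forms (`repF_of_disc`). It is thus
enough to find a positive form of discriminant 3 with `n` as its last coefficient. The forms used
are `a x² + b x y + c x z + p y² + n z²` with `p` prime and `D = 4ap - b² > 0`; the discriminant is
`n D - c² p`.

* If `3 ∤ n`, take `c = 1` and `p = n D - 3` with `4 ∣ D`. Then `(-D/p) (n/p) = (-3/p) = (p/3)`,
  while `(n/p)` depends only on `n` because `p ≡ -3` modulo `4n`. Dirichlet's theorem gives a prime
  in this class whose residue modulo 3 makes `(-D/p) = 1`, so that suitable `a` and `b` exist.
* If `n = 3m` with `m ≡ 1` modulo 3, take `c = 3` and `3 p = m D - 1` with `4 ∣ D`. Then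
  `(-D/p) = (m/p) = (m/3p) = 1`.
* If `9 ∣ n`, a representation of `n / 9` is scaled by 3.

The remaining `n` are `≡ 6` modulo 9, hence exceptional.
-/

/-- The integer `n` is represented by the form `x² + (y² + yz + z²)`. -/
def RepF (n : ℤ) : Prop := ∃ x y z : ℤ, n = x ^ 2 + (y ^ 2 + y * z + z ^ 2)

/-- The integral ternary quadratic form `a x² + b xy + c xz + d y² + e yz + f z²`. -/
def ternary (a b c d e f x y z : ℤ) : ℤ :=
  a * x ^ 2 + b * x * y + c * x * z + d * y ^ 2 + e * y * z + f * z ^ 2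

/-- Reduction of `K` modulo `H` to absolute value at most `H / 2`. -/
theorem exists_shift (H K : ℤ) (hH : 0 < H) : ∃ k : ℤ, |2 * (K + k * H)| ≤ H := by
  refine ⟨-((2 * K + H) / (2 * H)), ?_⟩
  have h1 := Int.emod_add_mul_ediv (2 * K + H) (2 * H)
  have h2 := Int.emod_nonneg (2 * K + H) (by omega : 2 * H ≠ 0)
  have h3 := Int.emod_lt_of_pos (2 * K + H) (by omega : 0 < 2 * H)
  rw [abs_le]
  constructor <;> nlinarith

/-- The reduced forms of discriminant 3 with leading coefficient 1 are, up to signs and order of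
the variables, `x² + (y² + yz + z²)`. -/
theorem repF_of_reduced (b c d e f x y z : ℤ)
    (hdisc : 4 * 1 * d * f + b * c * e - 1 * e ^ 2 - d * c ^ 2 - f * b ^ 2 = 3)
    (hH : 0 < 4 * 1 * d - b ^ 2) (hb : |b| ≤ 1) (hc : |c| ≤ 1)
    (hK : |2 * (2 * 1 * e - b * c)| ≤ 4 * 1 * d - b ^ 2)
    (hH4 : 4 * 1 * d - b ^ 2 ≤ 4) : RepF (ternary 1 b c d e f x y z) := by
  have hd : d = 1 := by
    rw [abs_le] at hb
    have : b ^ 2 ≤ 1 := by nlinarith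
    nlinarith [sq_nonneg b]
  subst hd
  rw [abs_le] at hb hc hK
  obtain ⟨hb1, hb2⟩ := hb
  obtain ⟨hc1, hc2⟩ := hc
  obtain ⟨hK1, hK2⟩ := hK
  have he1 : -1 ≤ e := by nlinarith
  have he2 : e ≤ 1 := by nlinarith
  unfold RepF ternary
  interval_cases b <;> interval_cases c <;> interval_cases e <;> first
    | omega
    | (obtain rfl : f = 1 := by omega
       first
        | exact ⟨x, y, z, by ring1⟩
        | exact ⟨x, y, -z, by ring1⟩
        | exact ⟨y, x, z, by ring1⟩
        | exact ⟨y, x, -z, by ring1⟩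
        | exact ⟨z, x, y, by ring1⟩
        | exact ⟨z, x, -y, by ring1⟩)

/-- Values of a positive definite integral ternary form of discriminant 3 are values of
`x² + (y² + yz + z²)`. Hermite reduction is run as a lexicographic induction on the leading
coefficient `a` and on `H = 4ad - b²`, the leading coefficient of the binary form
`4a·g - (2ax + by + cz)² = H y² + 2K yz + L z²`, which satisfies `HL - K² = 12a`. For a reduced
form, `H² ≤ 16a` and `3a² ≤ H`, so `a = 1` and `H ≤ 4`. -/
theorem repF_of_disc : ∀ (A B : ℕ) (a b c d e f : ℤ), a.toNat = A →
    (4 * a * d - b ^ 2).toNat = B → 0 < a → 0 < 4 * a * d - b ^ 2 →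
    4 * a * d * f + b * c * e - a * e ^ 2 - d * c ^ 2 - f * b ^ 2 = 3 →
    ∀ x y z : ℤ, RepF (ternary a b c d e f x y z) := by
  intro A
  induction A using Nat.strong_induction_on with | _ A ihA => ?_
  intro B
  induction B using Nat.strong_induction_on with | _ B ihB => ?_
  -- The reduced case: either a coordinate swap lowers `(a, 4ad - b²)` or the Hermite bounds
  -- force `a = 1`.
  have key : ∀ a b c d e f : ℤ, a.toNat = A → (4 * a * d - b ^ 2).toNat = B → 0 < a →
      0 < 4 * a * d - b ^ 2 →
      4 * a * d * f + b * c * e - a * e ^ 2 - d * c ^ 2 - f * b ^ 2 = 3 →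
      |b| ≤ a → |c| ≤ a → |2 * (2 * a * e - b * c)| ≤ 4 * a * d - b ^ 2 →
      ∀ x y z : ℤ, RepF (ternary a b c d e f x y z) := by
    intro a b c d e f hA hB ha hH hdisc hb hc hK x y z
    have hHL : (4 * a * d - b ^ 2) * (4 * a * f - c ^ 2) - (2 * a * e - b * c) ^ 2 = 12 * a := by
      linear_combination 4 * a * hdisc
    have hL : 0 < 4 * a * f - c ^ 2 := by
      by_contra hcon
      nlinarith [sq_nonneg (2 * a * e - b * c)]
    by_cases hsw : 4 * a * f - c ^ 2 < 4 * a * d - b ^ 2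
    · have := ihB _ (by omega) a c b f e d hA rfl ha hL (by linear_combination hdisc) x z y
      convert this using 1
      unfold ternary; ring
    have hd : 0 < d := by nlinarith [sq_nonneg b]
    by_cases hda : d < a
    · have := ihA d.toNat (by omega) _ d b e a c f rfl rfl hd (by linarith)
        (by linear_combination hdisc) y x z
      convert this using 1
      unfold ternary; ring
    have hb2 : b ^ 2 ≤ a ^ 2 := by
      rw [← sq_abs b]; gcongr
    have hK2 : 4 * (2 * a * e - b * c) ^ 2 ≤ (4 * a * d - b ^ 2) ^ 2 := by
      calc 4 * (2 * a * e - b * c) ^ 2 = |2 * (2 * a * e - b * c)| ^ 2 := by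
            rw [sq_abs]; ring
        _ ≤ _ := by gcongr
    set H := 4 * a * d - b ^ 2 with hHdef
    have h16 : H ^ 2 ≤ 16 * a := by nlinarith
    have h3a : 3 * a ^ 2 ≤ H := by nlinarith
    have ha1 : a = 1 := by
      by_contra hne
      have h2a : 2 ≤ a := by omega
      have : 6 * a ≤ H := by nlinarith
      nlinarith
    subst ha1
    have hH4 : H ≤ 4 := by nlinarith
    exact repF_of_reduced b c d e f x y z hdisc hH hb hc hK hH4
  intro a b c d e f hA hB ha hH hdisc x y z
  -- A shift of `y` by a multiple of `z` reduces the middle coefficient of the binary form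
  -- `4a·g - (2ax + by + cz)²`; shifts of `x` then make `|b|, |c| ≤ a` without affecting it.
  obtain ⟨k, hk⟩ := exists_shift _ (2 * a * e - b * c) hH
  obtain ⟨i, hi⟩ := exists_shift (2 * a) b (by omega)
  obtain ⟨j, hj⟩ := exists_shift (2 * a) (c + k * b) (by omega)
  have h1 : |b + 2 * a * i| ≤ a := by
    rw [abs_le] at hi ⊢; constructor <;> linarith
  have h2 : |c + k * b + 2 * a * j| ≤ a := by
    rw [abs_le] at hj ⊢; constructor <;> linarith
  have hHeq : 4 * a * (d + b * i + a * i ^ 2) - (b + 2 * a * i) ^ 2 = 4 * a * d - b ^ 2 := by ring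
  have := key a (b + 2 * a * i) (c + k * b + 2 * a * j) (d + b * i + a * i ^ 2)
    (e + 2 * d * k + i * (c + k * b) + b * j + 2 * a * i * j)
    (f + e * k + d * k ^ 2 + j * (c + k * b) + a * j ^ 2) hA (by rw [hHeq, hB]) ha
    (by rw [hHeq]; exact hH) (by linear_combination hdisc) h1 h2
    (by rw [hHeq]; convert hk using 2; ring)
    (x - i * (y - k * z) - j * z) (y - k * z) z
  convert this using 1
  unfold ternary; ring

theorem sum_ne_six_mod_nine (x y z : ZMod 9) : x ^ 2 + (y ^ 2 + y * z + z ^ 2) ≠ 6 := by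
  revert x y z; decide +kernel

theorem three_mul_eq_zero_of_sum_eq_zero_mod_nine (x y z : ZMod 9) :
    x ^ 2 + (y ^ 2 + y * z + z ^ 2) = 0 →
    3 * x = 0 ∧ 3 * y = 0 ∧ 3 * z = 0 := by
  revert x y z; decide +kernel

open NumberTheorySymbols

/-- If `4 ∣ D` and `-D` is a square modulo the odd prime `p`, then some positive binary form of
discriminant `-D` has `p` as a coefficient. -/
theorem exists_lift {p : ℕ} (hp : p.Prime) (hp2 : p % 2 = 1) {D : ℤ} (hD : 0 < D) (h4 : 4 ∣ D)
    (hJ : J(-D | p) = 1) : ∃ a b : ℤ, 0 < a ∧ 4 * a * p - b ^ 2 = D := by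
  have : Fact p.Prime := ⟨hp⟩
  obtain ⟨r, hr⟩ := ZMod.isSquare_of_jacobiSym_eq_one hJ
  obtain ⟨b₀, rfl⟩ := ZMod.intCast_surjective r
  have hdvd : (p : ℤ) ∣ b₀ ^ 2 + D := by
    rw [← ZMod.intCast_zmod_eq_zero_iff_dvd]
    push_cast at hr ⊢
    linear_combination -hr
  -- one of `b₀`, `b₀ + p` is even
  obtain ⟨b, hb2, hb⟩ : ∃ b : ℤ, 2 ∣ b ∧ (p : ℤ) ∣ b ^ 2 + D := by
    rcases Int.even_or_odd b₀ with h | h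
    · exact ⟨b₀, h.two_dvd, hdvd⟩
    · refine ⟨b₀ + p, ?_, ?_⟩
      · obtain ⟨t, rfl⟩ := h; omega
      · have : (b₀ + p) ^ 2 + D = (b₀ ^ 2 + D) + p * (2 * b₀ + p) := by ring
        rw [this]; exact dvd_add hdvd (dvd_mul_right _ _)
  have h4b : (4 : ℤ) ∣ b ^ 2 + D := by
    obtain ⟨t, rfl⟩ := hb2
    exact dvd_add ⟨t ^ 2, by ring⟩ h4
  have hcop : IsCoprime (4 : ℤ) p := by
    have : Nat.Coprime 4 p := by
      have h : Nat.Coprime (2 ^ 2) p := Nat.Coprime.pow_left 2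
        ((Nat.coprime_two_left).2 (Nat.odd_iff.2 hp2))
      simpa using h
    exact_mod_cast Nat.isCoprime_iff_coprime.2 this
  obtain ⟨a, ha⟩ := hcop.mul_dvd h4b hb
  refine ⟨a, b, ?_, by linear_combination -ha⟩
  have hp0 : (0 : ℤ) < p := by exact_mod_cast hp.pos
  by_contra hcon
  nlinarith [sq_nonneg b]

theorem repF_of_not_three_dvd {n : ℕ} (hn : 0 < n) (h3 : ¬ 3 ∣ n) : RepF n := by
  have h3n : Nat.Coprime 3 n := (Nat.Prime.coprime_iff_not_dvd Nat.prime_three).2 h3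
  have hcop3 : Nat.Coprime (4 * n - 3) n := by
    have hg1 := Nat.gcd_dvd_left (4 * n - 3) n
    have hg2 := Nat.gcd_dvd_right (4 * n - 3) n
    have : (4 * n - 3).gcd n ∣ 3 := by
      have := Nat.dvd_sub (hg2.mul_left 4) hg1
      rwa [show 4 * n - (4 * n - 3) = 3 by omega] at this
    exact Nat.eq_one_of_dvd_one (h3n ▸ Nat.dvd_gcd this hg2)
  have hcop4 : Nat.Coprime (4 * n - 3) (4 * n) := by
    refine Nat.Coprime.mul_right ?_ hcop3
    have h : Nat.Coprime (4 * n - 3) (2 ^ 2) := Nat.Coprime.pow_right 2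
      ((Nat.coprime_two_right).2 (Nat.odd_iff.2 (by omega)))
    simpa using h
  -- `(n / p) = (n / 4n - 3)` for every prime `p ≡ -3` modulo `4n`, so the residue `ε` of `p`
  -- modulo 3 can be chosen to make `(-3 / p) = (p / 3)` agree with it.
  obtain ⟨ε, hε, hεs⟩ : ∃ ε : ℕ, Nat.Coprime ε 3 ∧ J(ε | 3) = J(n | 4 * n - 3) := by
    rcases jacobiSym.eq_one_or_neg_one (a := n) (b := 4 * n - 3)
      (by simpa [Int.gcd_natCast_natCast] using hcop3.symm) with h | h
    · exact ⟨1, by norm_num, by rw [h]; norm_num⟩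
    · exact ⟨2, by norm_num, by rw [h]; norm_num⟩
  have hco : Nat.Coprime (4 * n) 3 := Nat.Coprime.mul_left (by norm_num) h3n.symm
  obtain ⟨r, hr1, hr2⟩ := Nat.chineseRemainder hco (4 * n - 3) ε
  have hrc : Nat.Coprime r (4 * n * 3) := by
    refine Nat.Coprime.mul_right ?_ ?_
    · rw [Nat.Coprime, hr1.gcd_eq]; exact hcop4
    · rw [Nat.Coprime, hr2.gcd_eq]; exact hε
  obtain ⟨p, hp3, hp, hpr⟩ := Nat.forall_exists_prime_gt_and_modEq 3 (by omega) hrc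
  have hp1 : p ≡ 4 * n - 3 [MOD 4 * n] := (hpr.of_mul_right 3).trans hr1
  have hpε : p ≡ ε [MOD 3] := (hpr.of_mul_left (4 * n)).trans hr2
  obtain ⟨t, ht⟩ : 4 * n ∣ p + 3 := by
    rw [← Nat.modEq_zero_iff_dvd]
    have := hp1.add_right 3
    rw [show 4 * n - 3 + 3 = 4 * n by omega] at this
    exact this.trans (by simp [Nat.ModEq])
  have hp4 : p % 4 = 1 := by
    have : p + 3 = 4 * (n * t) := by rw [ht]; ring
    omega
  have hodd : Odd p := Nat.odd_iff.2 (by omega)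
  have ht0 : 0 < t := by
    rcases Nat.eq_zero_or_pos t with rfl | h
    · simp at ht
    · exact h
  have hs : J(n | p) = J(n | 4 * n - 3) := by
    rw [jacobiSym.mod_right' n hodd, hp1, ← jacobiSym.mod_right' n (Nat.odd_iff.2 (by omega))]
  have hχ : ZMod.χ₄ p = 1 := ZMod.χ₄_nat_one_mod_four hp4
  have h3p : J(-3 | p) = J(n | 4 * n - 3) := by
    rw [jacobiSym.neg _ hodd, hχ, one_mul, ← hεs]
    have := jacobiSym.quadratic_reciprocity_one_mod_four' (a := 3) (b := p) (by decide) hp4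
    push_cast at this
    rw [this]
    exact jacobiSym.mod_left' (by exact_mod_cast hpε)
  have hprod : J(-(4 * t : ℤ) | p) * J(n | p) = J(-3 | p) := by
    rw [← jacobiSym.mul_left]
    apply jacobiSym.mod_left'
    have : (p : ℤ) + 3 = 4 * n * t := by exact_mod_cast ht
    rw [show -(4 * t : ℤ) * n = -3 + p * (-1) by linear_combination this]
    simp
  have hs1 : J(n | 4 * n - 3) ≠ 0 :=
    jacobiSym.ne_zero (by simpa [Int.gcd_natCast_natCast] using hcop3.symm)
  have hJ : J(-(4 * t : ℤ) | p) = 1 := by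
    rw [hs, h3p] at hprod
    exact mul_right_cancel₀ hs1 (by rw [hprod, one_mul])
  obtain ⟨a, b, ha, hab⟩ := exists_lift hp (by omega) (D := 4 * t) (by positivity)
    (dvd_mul_right _ _) hJ
  have htz : (p : ℤ) + 3 = 4 * n * t := by exact_mod_cast ht
  have := repF_of_disc _ _ a b 1 p 0 n rfl rfl ha (by rw [hab]; positivity)
    (by linear_combination n * hab - htz) 0 0 1
  simpa [ternary] using this

theorem repF_three_mul {m : ℕ} (hm : m % 3 = 1) : RepF (3 * m : ℕ) := by
  have hm0 : 0 < m := by omega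
  -- `r` is an inverse of `-3` modulo `4m`
  obtain ⟨r, hr⟩ : ∃ r : ℕ, 4 * m ∣ 3 * r + 1 :=
     ⟨(4 * m - 1) / 3, 1, by omega⟩
  have hrc : Nat.Coprime r (4 * m) := by
    have h1 := (Nat.gcd_dvd_right r (4 * m)).trans hr
    have h2 : r.gcd (4 * m) ∣ 3 * r := (Nat.gcd_dvd_left r (4 * m)).mul_left 3
    exact Nat.eq_one_of_dvd_one ((Nat.dvd_add_right h2).1 h1)
  obtain ⟨p, hp3, hp, hpr⟩ := Nat.forall_exists_prime_gt_and_modEq 3 (by omega) hrc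
  obtain ⟨t, ht⟩ : 4 * m ∣ 3 * p + 1 := by
    rw [← Nat.modEq_zero_iff_dvd] at hr ⊢
    exact ((hpr.mul_left 3).add_right 1).trans hr
  have hp4 : p % 4 = 1 := by
    have : 3 * p + 1 = 4 * (m * t) := by rw [ht]; ring
    omega
  have hodd : Odd p := Nat.odd_iff.2 (by omega)
  have ht0 : 0 < t := by
    rcases Nat.eq_zero_or_pos t with rfl | h
    · simp at ht
    · exact h
  have htz : 3 * (p : ℤ) + 1 = 4 * m * t := by exact_mod_cast ht
  -- `(m / ·)` has period `4m` on odd moduli and `3p ≡ 4m - 1`; modulo `4m - 1` the number `4m`,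
  -- hence `m`, is a square.
  have h3p : J(m | 3 * p) = 1 := by
    have hodd3 : Odd (3 * p) := Odd.mul (by decide) hodd
    have hmod : 3 * p ≡ 4 * m - 1 [MOD 4 * m] := by
      apply Nat.ModEq.add_right_cancel' 1
      rw [show 4 * m - 1 + 1 = 4 * m by omega, ht]
      simp [Nat.ModEq]
    have hodd' : Odd (4 * m - 1) := Nat.odd_iff.2 (by omega)
    rw [jacobiSym.mod_right' m hodd3, hmod, ← jacobiSym.mod_right' m hodd']
    have h4 := jacobiSym.mul_left 4 m (4 * m - 1)
    rw [jacobiSym.at_four hodd', one_mul] at h4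
    rw [← h4, ← jacobiSym.one_left (4 * m - 1)]
    apply jacobiSym.mod_left'
    have : (4 * m : ℤ) = 1 + ((4 * m - 1 : ℕ) : ℤ) * 1 := by omega
    rw [this, Int.add_mul_emod_self_left]
  have hmp : J(m | p) = 1 := by
    have : NeZero p := ⟨hp.ne_zero⟩
    rw [jacobiSym.mul_right] at h3p
    have h3 : J(m | 3) = 1 := by
      rw [jacobiSym.mod_left, show (m : ℤ) % (3 : ℕ) = 1 by omega]
      exact jacobiSym.one_left 3
    rwa [h3, one_mul] at h3p
  have hJ : J(-(4 * t : ℤ) | p) = 1 := by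
    have hχ : ZMod.χ₄ p = 1 := ZMod.χ₄_nat_one_mod_four hp4
    have hprod : J((4 * t : ℤ) | p) * J(m | p) = 1 := by
      rw [← jacobiSym.mul_left, ← jacobiSym.one_left p]
      apply jacobiSym.mod_left'
      rw [show (4 * t : ℤ) * m = 1 + p * 3 by linear_combination -htz]
      simp
    rw [jacobiSym.neg _ hodd, hχ, one_mul]
    rwa [hmp, mul_one] at hprod
  obtain ⟨a, b, ha, hab⟩ := exists_lift hp (by omega) (D := 4 * t) (by positivity)
    (dvd_mul_right _ _) hJ
  have := repF_of_disc _ _ a b 3 p 0 (3 * m) rfl rfl ha (by rw [hab]; positivity)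
    (by linear_combination 3 * m * hab - 3 * htz) 0 0 1
  simpa [ternary] using this

theorem repF_of_not_exceptional (n : ℕ) (h : ¬ ∃ k l : ℕ, n = 9 ^ k * (9 * l + 6)) : RepF n := by
  induction n using Nat.strong_induction_on with | _ n ih => ?_
  rcases Nat.eq_zero_or_pos n with rfl | hn
  · exact ⟨0, 0, 0, by norm_num⟩
  by_cases h3 : 3 ∣ n
  · obtain ⟨m, rfl⟩ := h3
    rcases (by omega : m % 3 = 0 ∨ m % 3 = 1 ∨ m % 3 = 2) with hm | hm | hm
    · obtain ⟨x, y, z, hxyz⟩ := ih (m / 3) (by omega) (by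
        rintro ⟨k, l, hkl⟩
        exact h ⟨k + 1, l, by rw [pow_succ]; linarith [Nat.div_add_mod m 3]⟩)
      refine ⟨3 * x, 3 * y, 3 * z, ?_⟩
      have : ((3 * m : ℕ) : ℤ) = 9 * (m / 3 : ℕ) := by omega
      rw [this, hxyz]; ring
    · exact repF_three_mul hm
    · exact absurd ⟨0, m / 3, by omega⟩ h
  · exact repF_of_not_three_dvd hn h3

theorem not_repF_exceptional (k l : ℕ) : ¬ RepF ((9 ^ k * (9 * l + 6) : ℕ) : ℤ) := by
  induction k with
  | zero =>
    rintro ⟨x, y, z, h⟩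
    have h' := congrArg (Int.cast : ℤ → ZMod 9) h
    push_cast at h'
    refine sum_ne_six_mod_nine x y z (h'.symm.trans ?_)
    rw [show (9 : ZMod 9) = 0 from rfl]; ring
  | succ k ih =>
    rintro ⟨x, y, z, h⟩
    have h' := congrArg (Int.cast : ℤ → ZMod 9) h
    push_cast at h'
    rw [pow_succ, show (9 : ZMod 9) = 0 from rfl] at h'
    obtain ⟨hx, hy, hz⟩ := three_mul_eq_zero_of_sum_eq_zero_mod_nine x y z
      (h'.symm.trans (by ring))
    have hdiv : ∀ w : ℤ, (3 * w : ZMod 9) = 0 → ∃ v, w = 3 * v := by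
      intro w hw
      have h9 : ((9 : ℕ) : ℤ) ∣ 3 * w := by
        rw [← ZMod.intCast_zmod_eq_zero_iff_dvd]; push_cast; exact hw
      exact ⟨w / 3, by omega⟩
    obtain ⟨x, rfl⟩ := hdiv x hx
    obtain ⟨y, rfl⟩ := hdiv y hy
    obtain ⟨z, rfl⟩ := hdiv z hz
    refine ih ⟨x, y, z, ?_⟩
    push_cast at h ⊢
    rw [pow_succ] at h
    linarith

theorem stmt_3 (n : ℕ) :
    (∃ x y z : ℤ, (n : ℤ) = x ^ 2 + (y ^ 2 + y * z + z ^ 2)) ↔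
    ¬ ∃ k l : ℕ, n = 9 ^ k * (9 * l + 6) := by
  refine ⟨?_, repF_of_not_exceptional n⟩
  rintro h ⟨k, l, rfl⟩
  exact not_repF_exceptional k l h
end
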